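/- Let (F,*) be a *-Pythagorean field with positive definite involution. Let Q be a continuous *-factor over F with unique rank function N_Q, and assume there exists a *-subalgebra Q_0 of Q of countable F-dimension which is dense for the N_Q-metric. Then the following are equivalent: (i) Q is *-isomorphic to M_F; (ii) Q is *-isomorphic to the completion of some ultramatricial *-algebra B with respect to the metric induced by some extremal pseudo-rank function on B; (iii) for every eps > 0 and all x_1, ..., x_n in Q there exist a *-subalgebra A of Q *-isomorphic to a standard matricial *-algebra and elements y_1, ..., y_n in A with N_Q(x_i - y_i) < eps for all i. -/

import Mathlib

open scoped TensorProduct Kronecker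

noncomputable section

namespace AraClaramunt

/-! ### Pseudo-rank functions and rank metric notions -/

/-- A pseudo-rank function on a unital ring. -/
structure IsPseudoRankFunction {R : Type*} [Ring R] (N : R → ℝ) : Prop where
  nonneg : ∀ x : R, 0 ≤ N x
  le_one : ∀ x : R, N x ≤ 1
  map_one : N 1 = 1
  subadditive : ∀ a b : R, N (a + b) ≤ N a + N b
  mul_le_left : ∀ a b : R, N (a * b) ≤ N a
  mul_le_right : ∀ a b : R, N (a * b) ≤ N b
  add_of_orthogonal : ∀ e f : R, IsIdempotentElem e → IsIdempotentElem f →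
    e * f = 0 → f * e = 0 → N (e + f) = N e + N f

/-- A rank function is a faithful pseudo-rank function. -/
def IsRankFunction {R : Type*} [Ring R] (N : R → ℝ) : Prop :=
  IsPseudoRankFunction N ∧ ∀ x : R, N x = 0 → x = 0

/-- Cauchy sequence for the pseudo-metric `d(x,y) = N (x - y)`. -/
def RankCauchy {R : Type*} [Ring R] (N : R → ℝ) (u : ℕ → R) : Prop :=
  ∀ ε : ℝ, 0 < ε → ∃ n₀ : ℕ, ∀ m n : ℕ, n₀ ≤ m → n₀ ≤ n → N (u m - u n) < ε

/-- Convergence for the pseudo-metric `d(x,y) = N (x - y)`. -/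
def RankTendsto {R : Type*} [Ring R] (N : R → ℝ) (u : ℕ → R) (x : R) : Prop :=
  ∀ ε : ℝ, 0 < ε → ∃ n₀ : ℕ, ∀ n : ℕ, n₀ ≤ n → N (u n - x) < ε

/-- Completeness with respect to the pseudo-metric `d(x,y) = N (x - y)`. -/
def RankComplete {R : Type*} [Ring R] (N : R → ℝ) : Prop :=
  ∀ u : ℕ → R, RankCauchy N u → ∃ x : R, RankTendsto N u x

/-- Density of a subset with respect to the pseudo-metric `d(x,y) = N (x - y)`. -/
def RankDense {R : Type*} [Ring R] (N : R → ℝ) (S : Set R) : Prop :=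
  ∀ x : R, ∀ ε : ℝ, 0 < ε → ∃ y ∈ S, N (x - y) < ε

/-- von Neumann regularity. -/
def VNRegular (R : Type*) [Ring R] : Prop :=
  ∀ x : R, ∃ y : R, x = x * y * x

/-- A continuous factor: a simple, von Neumann regular, right and left self-injective ring
admitting a rank function whose image is all of `[0,1]`. -/
def IsContinuousFactor (R : Type*) [Ring R] : Prop :=
  IsSimpleRing R ∧ VNRegular R ∧ Module.Injective R R ∧ Module.Injective Rᵐᵒᵖ Rᵐᵒᵖ ∧
    ∃ N : R → ℝ, IsRankFunction N ∧ Set.range N = Set.Icc (0 : ℝ) 1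

/-- An extremal pseudo-rank function: an extreme point of the convex set of all
pseudo-rank functions. -/
def IsExtremalPseudoRankFunction {R : Type*} [Ring R] (N : R → ℝ) : Prop :=
  N ∈ Set.extremePoints ℝ {S : R → ℝ | IsPseudoRankFunction S}

/-! ### Matricial and ultramatricial algebras -/

/-- A matricial `K`-algebra. -/
def IsMatricialAlgebra (K : Type*) [Field K] (A : Type*) [Ring A] [Algebra K A] : Prop :=
  ∃ (k : ℕ) (n : Fin (k + 1) → ℕ), (∀ i, 0 < n i) ∧
    Nonempty (A ≃ₐ[K] ((i : Fin (k + 1)) → Matrix (Fin (n i)) (Fin (n i)) K))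

/-- An ultramatricial `K`-algebra: the increasing union of matricial subalgebras. -/
def IsUltramatricialAlgebra (K : Type*) [Field K] (B : Type*) [Ring B] [Algebra K B] : Prop :=
  ∃ C : ℕ → Subalgebra K B, (∀ n, C n ≤ C (n + 1)) ∧
    (∀ n, IsMatricialAlgebra K (C n)) ∧ (∀ b : B, ∃ n, b ∈ C n)

/-- `Q`, with rank function `N`, is the rank-metric completion of a direct limit of the matrix
algebras `M_{p n}(K)`: it is complete and carries a dense increasing tower of unital subalgebras
isomorphic to `M_{p n}(K)`. -/
def IsMatrixTowerCompletion (K : Type*) [Field K] (Q : Type*) [Ring Q] [Algebra K Q]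
    (N : Q → ℝ) (p : ℕ → ℕ) : Prop :=
  IsRankFunction N ∧ RankComplete N ∧
    ∃ A : ℕ → Subalgebra K Q, (∀ n, A n ≤ A (n + 1)) ∧
      (∀ n, Nonempty ((A n) ≃ₐ[K] Matrix (Fin (p n)) (Fin (p n)) K)) ∧
      RankDense N (⋃ n, (A n : Set Q))

/-- `Q` is (a copy of) von Neumann's continuous factor `M_K`, the completion of
`lim_n M_{2^n}(K)` with respect to its unique rank function. -/
def IsMK (K : Type*) [Field K] (Q : Type*) [Ring Q] [Algebra K Q] (N : Q → ℝ) : Prop :=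
  IsMatrixTowerCompletion K Q N (fun n => 2 ^ n)

/-- The canonical block-diagonal unital embedding `M_a(K) → M_b(K)`, `z ↦ z ⊗ 1_g`,
where `b = a * g`. -/
def blockEmbedFun (K : Type*) [Semiring K] {a : ℕ} (g b : ℕ) (h : a * g = b)
    (z : Matrix (Fin a) (Fin a) K) : Matrix (Fin b) (Fin b) K :=
  Matrix.reindex (finProdFinEquiv.trans (finCongr h)) (finProdFinEquiv.trans (finCongr h))
    (z ⊗ₖ (1 : Matrix (Fin g) (Fin g) K))

end AraClaramunt
namespace AraClaramunt

/-! ### Star notions -/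

/-- Properness of an involution: `x* x = 0` implies `x = 0`. -/
def ProperStar (R : Type*) [NonUnitalNonAssocRing R] [Star R] : Prop :=
  ∀ x : R, star x * x = 0 → x = 0

/-- A projection: a self-adjoint idempotent. -/
def IsProjection {R : Type*} [Mul R] [Star R] (p : R) : Prop :=
  star p = p ∧ p * p = p

/-- The order on projections: `q ≤ p` iff `p q = q p = q`. -/
def ProjLE {R : Type*} [Mul R] (q p : R) : Prop :=
  p * q = q ∧ q * p = q

/-- `*`-equivalence of projections: `e = w w*` and `f = w* w` for some `w`. -/
def StarEquivProj {R : Type*} [Mul R] [Star R] (e f : R) : Prop :=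
  ∃ w : R, e = w * star w ∧ f = star w * w

/-- Equivalence of projections: `e = x y`, `f = y x` with `x ∈ eRf`, `y ∈ fRe`. -/
def EquivProj {R : Type*} [Mul R] (e f : R) : Prop :=
  ∃ x y : R, x = e * x * f ∧ y = f * y * e ∧ e = x * y ∧ f = y * x

/-- `y` is the relative inverse of `x` in a `*`-regular ring. -/
def IsRelativeInverse {R : Type*} [Mul R] [Star R] (x y : R) : Prop :=
  x * y * x = x ∧ y * x * y = y ∧ star (x * y) = x * y ∧ star (y * x) = y * x

/-- `e = LP(x)`: `e` is a projection with `x R = e R`. -/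
def IsLeftProjOf {R : Type*} [Mul R] [Star R] (x e : R) : Prop :=
  IsProjection e ∧ e * x = x ∧ ∃ y : R, e = x * y

/-- `f = RP(x)`: `f` is a projection with `R x = R f`. -/
def IsRightProjOf {R : Type*} [Mul R] [Star R] (x f : R) : Prop :=
  IsProjection f ∧ x * f = x ∧ ∃ y : R, f = y * x

/-- Positive definiteness of the involution of a field. -/
def PosDefStar (F : Type*) [Field F] [StarRing F] : Prop :=
  ∀ (n : ℕ) (x : Fin n → F), (∑ i, star (x i) * x i) = 0 → ∀ i, x i = 0

/-- `*`-Pythagorean field. -/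
def StarPythagorean (F : Type*) [Field F] [StarRing F] : Prop :=
  ∀ x y : F, ∃ z : F, x * star x + y * star y = z * star z

/-- A standard matricial `*`-algebra over `(F, *)`: a `*`-algebra `*`-isomorphic to a finite
product of matrix algebras `M_{n i}(F)` with the `*`-transpose involution. -/
def IsStandardMatricialStarAlgebra (F : Type*) [Field F] [StarRing F]
    (A : Type*) [Ring A] [Algebra F A] [StarRing A] [StarModule F A] : Prop :=
  ∃ (k : ℕ) (n : Fin (k + 1) → ℕ), (∀ i, 0 < n i) ∧
    Nonempty (A ≃⋆ₐ[F] ((i : Fin (k + 1)) → Matrix (Fin (n i)) (Fin (n i)) F))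

/-- A map `M_a(F) → M_b(F)` is standard (up to a permutation of the index set) if it is
`z ↦ diag(z, …, z)` (multiplicity `t`), suitably reindexed. -/
def IsStandardMatrixMap (F : Type*) [Field F] {a b : ℕ}
    (Φ : Matrix (Fin a) (Fin a) F → Matrix (Fin b) (Fin b) F) : Prop :=
  ∃ (t : ℕ) (E : Fin a × Fin t ≃ Fin b),
    ∀ z, Φ z = Matrix.reindex E E (Matrix.blockDiagonal fun _ : Fin t => z)

/-- A map between finite products of matrix algebras over `F` is standard (block diagonal,
up to a permutation of the index sets): it is determined by multiplicities `t j i`, the `j`-th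
component being the block-diagonal sum of `t j i` copies of the `i`-th component of the input. -/
def IsStandardBlockMap (F : Type*) [Field F] {k l : ℕ} (n : Fin (k + 1) → ℕ)
    (m : Fin (l + 1) → ℕ)
    (Φ : ((i : Fin (k + 1)) → Matrix (Fin (n i)) (Fin (n i)) F) →
      ((j : Fin (l + 1)) → Matrix (Fin (m j)) (Fin (m j)) F)) : Prop :=
  ∃ t : Fin (l + 1) → Fin (k + 1) → ℕ,
    ∃ E : (j : Fin (l + 1)) →
      ((Σ c : (Σ i : Fin (k + 1), Fin (t j i)), Fin (n c.1)) ≃ Fin (m j)),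
      ∀ z j, Φ z j =
        Matrix.reindex (E j) (E j)
          (Matrix.blockDiagonal' fun c : (Σ i : Fin (k + 1), Fin (t j i)) => z c.1)

end AraClaramunt
namespace AraClaramunt

/-- `Q`, with rank function `N`, is (a copy of) the `*`-algebra `M_F`: the completion of the
standard direct limit `lim_n M_{2^n}(F)` (block-diagonal standard `*`-embeddings) with respect
to its unique rank function, with the involution induced by the `*`-transpose involutions. -/
def IsMFStarCompletion (F : Type*) [Field F] [StarRing F]
    (Q : Type*) [Ring Q] [Algebra F Q] [StarRing Q] [StarModule F Q] (N : Q → ℝ) : Prop :=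
  IsRankFunction N ∧ (∀ x : Q, N (star x) = N x) ∧ RankComplete N ∧
    ∃ A : ℕ → StarSubalgebra F Q,
      ∃ hA : ∀ n, A n ≤ A (n + 1),
        ∃ γ : (n : ℕ) → ((A n) ≃⋆ₐ[F] Matrix (Fin (2 ^ n)) (Fin (2 ^ n)) F),
          RankDense N (⋃ n, (A n : Set Q)) ∧
            ∀ n, IsStandardMatrixMap F
              (fun z => γ (n + 1) (StarSubalgebra.inclusion (hA n) ((γ n).symm z)))

/-- A standard ultramatricial `*`-algebra: an increasing union of `*`-subalgebras,
`*`-isomorphic to standard matricial `*`-algebras, with standard (block diagonal)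
connecting maps. -/
def IsStandardUltramatricialStarAlgebra (F : Type*) [Field F] [StarRing F]
    (B : Type*) [Ring B] [Algebra F B] [StarRing B] [StarModule F B] : Prop :=
  ∃ C : ℕ → StarSubalgebra F B,
    ∃ hC : ∀ n, C n ≤ C (n + 1),
      (∀ b : B, ∃ n, b ∈ C n) ∧
        ∃ (k : ℕ → ℕ) (m : (n : ℕ) → Fin (k n + 1) → ℕ),
          (∀ n i, 0 < m n i) ∧
            ∃ γ : (n : ℕ) →
              ((C n) ≃⋆ₐ[F] ((i : Fin (k n + 1)) → Matrix (Fin (m n i)) (Fin (m n i)) F)),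
              ∀ n, IsStandardBlockMap F (m n) (m (n + 1))
                (fun z => γ (n + 1) (StarSubalgebra.inclusion (hC n) ((γ n).symm z)))

/-- An ultramatricial `*`-algebra: an increasing union of `*`-subalgebras which are
`*`-isomorphic to standard matricial `*`-algebras. -/
def IsUltramatricialStarAlgebra (F : Type*) [Field F] [StarRing F]
    (B : Type*) [Ring B] [Algebra F B] [StarRing B] [StarModule F B] : Prop :=
  ∃ C : ℕ → StarSubalgebra F B, (∀ n, C n ≤ C (n + 1)) ∧
    (∀ n, IsStandardMatricialStarAlgebra F (C n)) ∧ (∀ b : B, ∃ n, b ∈ C n)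

/-- `p` is `*`-equivalent (in `A`) to a standard projection of `A`, i.e. to a projection all of
whose components under some `*`-isomorphism of `A` with a standard matricial `*`-algebra are
diagonal matrices. -/
def IsQuasiStandardProjection (F : Type*) [Field F] [StarRing F]
    (A : Type*) [Ring A] [Algebra F A] [StarRing A] [StarModule F A] (p : A) : Prop :=
  ∃ (k : ℕ) (n : Fin (k + 1) → ℕ), (∀ i, 0 < n i) ∧
    ∃ (γ : A ≃⋆ₐ[F] ((i : Fin (k + 1)) → Matrix (Fin (n i)) (Fin (n i)) F)) (e : A),
      IsProjection e ∧ (∀ i, (γ e i).IsDiag) ∧ StarEquivProj p e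

/-- Hereditarily quasi-standard projection (Definition 4.4 of the paper). -/
def IsHereditarilyQuasiStandard (F : Type*) [Field F] [StarRing F]
    {R : Type*} [Ring R] [Algebra F R] [StarRing R] [StarModule F R]
    (N : R → ℝ) (A : StarSubalgebra F R) (p : R) : Prop :=
  ∃ hp : p ∈ A,
    IsQuasiStandardProjection F A ⟨p, hp⟩ ∧
      ∀ p' : R, p' ∈ A → IsProjection p' → ProjLE p' p → ∀ ε : ℝ, 0 < ε →
        ∃ A' : StarSubalgebra F R, A ≤ A' ∧ IsStandardMatricialStarAlgebra F A' ∧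
          ∃ p'' : R, ∃ hp'' : p'' ∈ A', IsProjection p'' ∧ ProjLE p'' p' ∧
            N (p' - p'') < ε ∧ IsQuasiStandardProjection F A' ⟨p'', hp''⟩

end AraClaramunt
namespace AraClaramunt

/-- Witness that `Q` (with rank function `NQ`) is `*`-isomorphic to the completion of an
ultramatricial `*`-algebra `B` with respect to the metric induced by an extremal pseudo-rank
function `NB` on `B`. -/
structure UltramatricialStarCompletionData (F : Type) [Field F] [StarRing F]
    (Q : Type) [Ring Q] [Algebra F Q] [StarRing Q] [StarModule F Q]
    (NQ : Q → ℝ) : Type 1 where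
  B : Type
  [ringB : Ring B]
  [algB : Algebra F B]
  [starB : StarRing B]
  [starModB : StarModule F B]
  NB : B → ℝ
  pseudoRank : IsPseudoRankFunction NB
  extremal : IsExtremalPseudoRankFunction NB
  ultramatricial : IsUltramatricialStarAlgebra F B
  φ : B →⋆ₐ[F] Q
  rank_eq : ∀ b : B, NQ (φ b) = NB b
  dense : RankDense NQ (Set.range φ)
  complete : RankComplete NQ

/-! If finitely many elements of `Q` are always close in rank to the image of a product of matrix
algebras, then any two nonzero projections `e` and `f` of `Q` have nonzero equivalent
subprojections: approximate a nonzero `e * z * f` by a matrix, whose range has an orthonormal basis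
because `F` is `*`-Pythagorean. Self-injectivity provides suprema of chains of partial isometries.
Hence projections are compared by their rank, every projection can be halved, and the rank metric
of `Q` is complete.

Given matrix units of size `2 ^ n` with diagonal projection `e` and finitely many elements of
`e * Q * e`, approximate the latter by a product of matrix algebras and cut its minimal projections
into copies of a projection `h` of rank `N e / 2 ^ m`. For `m` large the leftovers are negligible,
so up to small rank these copies are a frame filling `e`: the matrix units over it form a full
matrix algebra of size `2 ^ m`, which contains the approximants. Iterating along a countable
spanning set of the dense subalgebra gives a tower of algebras `M_{2 ^ n}(F)` with dense union.

Conversely, `rank / n` is the only pseudo-rank function on `M_n(F)`. So the restriction of `N` to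
the union of such a tower is the only pseudo-rank function there, and in particular extremal. -/

/-! ### Pseudo-rank functions -/

namespace IsPseudoRankFunction

variable {Q : Type*} [Ring Q] {N : Q → ℝ}

theorem map_zero (hN : IsPseudoRankFunction N) : N 0 = 0 := by
  simpa using hN.add_of_orthogonal 0 0 .zero .zero (mul_zero 0) (mul_zero 0)

theorem map_neg (hN : IsPseudoRankFunction N) (x : Q) : N (-x) = N x :=
  le_antisymm (by simpa using hN.mul_le_right (-1) x) (by simpa using hN.mul_le_right (-1) (-x))

theorem map_sub_comm (hN : IsPseudoRankFunction N) (x y : Q) : N (x - y) = N (y - x) := by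
  rw [← hN.map_neg, neg_sub]

theorem sub_le (hN : IsPseudoRankFunction N) (x y : Q) : N (x - y) ≤ N x + N y := by
  rw [sub_eq_add_neg, ← hN.map_neg y]
  exact hN.subadditive _ _

theorem sub_le_sub_add_sub (hN : IsPseudoRankFunction N) (x y z : Q) :
    N (x - z) ≤ N (x - y) + N (y - z) := by
  simpa using hN.subadditive (x - y) (y - z)

theorem sum_le (hN : IsPseudoRankFunction N) {ι : Type*} (s : Finset ι) (f : ι → Q) :
    N (∑ i ∈ s, f i) ≤ ∑ i ∈ s, N (f i) :=
  Finset.le_sum_of_subadditive N hN.map_zero.le hN.subadditive s f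

theorem smul_le {F : Type*} [CommSemiring F] [Algebra F Q] (hN : IsPseudoRankFunction N) (c : F)
    (x : Q) : N (c • x) ≤ N x := by
  rw [Algebra.smul_def]
  exact hN.mul_le_right _ _

theorem mul_mul_le (hN : IsPseudoRankFunction N) (a b c : Q) : N (a * b * c) ≤ N b :=
  (hN.mul_le_left _ _).trans (hN.mul_le_right _ _)

theorem comp {R : Type*} [Ring R] (hN : IsPseudoRankFunction N) (f : R →+* Q) :
    IsPseudoRankFunction fun x => N (f x) where
  nonneg _ := hN.nonneg _
  le_one _ := hN.le_one _
  map_one := by rw [_root_.map_one, hN.map_one]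
  subadditive a b := by simpa using hN.subadditive (f a) (f b)
  mul_le_left a b := by simpa using hN.mul_le_left (f a) (f b)
  mul_le_right a b := by simpa using hN.mul_le_right (f a) (f b)
  add_of_orthogonal a b ha hb hab hba := by
    simpa using hN.add_of_orthogonal (f a) (f b) (ha.map f) (hb.map f)
      (by rw [← map_mul, hab, _root_.map_zero]) (by rw [← map_mul, hba, _root_.map_zero])

end IsPseudoRankFunction

theorem IsRankFunction.pos {Q : Type*} [Ring Q] {N : Q → ℝ} (hN : IsRankFunction N) {x : Q}
    (hx : x ≠ 0) : 0 < N x :=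
  (hN.1.nonneg x).lt_of_ne fun h => hx (hN.2 x h.symm)

/-! ### Projections -/

section Projection

variable {Q : Type*} [Ring Q] [StarRing Q] {N : Q → ℝ} {p q v w x : Q}

theorem star_mul_eq_zero_comm : star v * w = 0 ↔ star w * v = 0 := by
  rw [← star_eq_zero, star_mul, star_star]

theorem mul_star_eq_zero_comm : v * star w = 0 ↔ w * star v = 0 := by
  rw [← star_eq_zero, star_mul, star_star]

theorem mul_eq_right_iff_star_mul_eq_left (hp : IsStarProjection p) :
    p * x = x ↔ star x * p = star x := by
  rw [← star_inj, star_mul, hp.isSelfAdjoint.star_eq]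

theorem mul_eq_left_iff_mul_star_eq_right (hp : IsStarProjection p) :
    x * p = x ↔ p * star x = star x := by
  rw [← star_inj, star_mul, hp.isSelfAdjoint.star_eq]

theorem mul_eq_right_iff_mul_eq_left (hp : IsStarProjection p) (hq : IsStarProjection q) :
    p * q = q ↔ q * p = q := by
  rw [mul_eq_right_iff_star_mul_eq_left hp, hq.isSelfAdjoint.star_eq]

theorem mul_eq_zero_comm_of_isStarProjection (hp : IsStarProjection p) (hq : IsStarProjection q) :
    p * q = 0 ↔ q * p = 0 := by
  rw [← star_eq_zero, star_mul, hp.isSelfAdjoint.star_eq, hq.isSelfAdjoint.star_eq]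

theorem IsPseudoRankFunction.map_add_projection (hN : IsPseudoRankFunction N)
    (hp : IsStarProjection p) (hq : IsStarProjection q) (h : p * q = 0) :
    N (p + q) = N p + N q :=
  hN.add_of_orthogonal p q hp.isIdempotentElem hq.isIdempotentElem h
    ((mul_eq_zero_comm_of_isStarProjection hp hq).1 h)

theorem IsPseudoRankFunction.map_sub_projection (hN : IsPseudoRankFunction N)
    (hp : IsStarProjection p) (hq : IsStarProjection q) (h : p * q = q) :
    N (p - q) = N p - N q := by
  have hsum := hN.map_add_projection (hq.sub_of_mul_eq_right hp h) hq
    (by rw [sub_mul, h, hq.isIdempotentElem.eq, sub_self])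
  rw [sub_add_cancel] at hsum
  linarith

theorem ProperStar.eq_zero_of_mul_star_self (hP : ProperStar Q) (h : x * star x = 0) : x = 0 :=
  star_eq_zero.1 (hP (star x) (by rwa [star_star]))

end Projection

/-! ### Partial isometries -/

/-- Partial isometries `v`: the initial projection is `star v * v`, the final one `v * star v`. -/
def IsPartialIsometry {Q : Type*} [Mul Q] [Star Q] (v : Q) : Prop :=
  v * star v * v = v

/-- The extension order on partial isometries: `w` restricts to `v` on the initial projection of
`v`, which lies below the initial projection of `w`. -/
structure PartialIsometryLE {Q : Type*} [Mul Q] [Star Q] (v w : Q) : Prop where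
  mul_initial : w * (star v * v) = v
  initial_mul_initial : star w * w * (star v * v) = star v * v

namespace IsPartialIsometry

variable {Q : Type*} [Ring Q] [StarRing Q] {N : Q → ℝ} {v w : Q}

theorem mul_initial (hv : IsPartialIsometry v) : v * (star v * v) = v := by
  rw [← mul_assoc]
  exact hv

theorem initial_mul_star (hv : IsPartialIsometry v) : star v * v * star v = star v := by
  simpa [mul_assoc] using congrArg star hv

protected theorem map {F R : Type*} [CommSemiring F] [Ring R] [StarRing R] [Algebra F Q]
    [Algebra F R] (hv : IsPartialIsometry v) (Θ : Q →⋆ₐ[F] R) : IsPartialIsometry (Θ v) := by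
  rw [IsPartialIsometry, ← map_star, ← map_mul, ← map_mul, hv]

protected theorem star (hv : IsPartialIsometry v) : IsPartialIsometry (star v) := by
  rw [IsPartialIsometry, star_star, hv.initial_mul_star]

theorem isStarProjection_initial (hv : IsPartialIsometry v) :
    IsStarProjection (star v * v) :=
  ⟨by rw [IsIdempotentElem, mul_assoc, hv.mul_initial], .star_mul_self v⟩

theorem isStarProjection_final (hv : IsPartialIsometry v) :
    IsStarProjection (v * star v) := by
  simpa using hv.star.isStarProjection_initial

theorem of_initial (hP : ProperStar Q) (h : IsStarProjection (star v * v)) :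
    IsPartialIsometry v := by
  have hzero : star (v * (1 - star v * v)) * (v * (1 - star v * v)) = 0 := by
    rw [star_mul, h.one_sub.isSelfAdjoint.star_eq, mul_assoc, ← mul_assoc (star v),
      h.mul_one_sub_self, mul_zero]
  have hv := hP _ hzero
  rw [mul_sub, mul_one, sub_eq_zero, ← mul_assoc] at hv
  exact hv.symm

theorem map_initial (hN : IsPseudoRankFunction N) (hv : IsPartialIsometry v) :
    N (star v * v) = N v :=
  (hN.mul_le_right _ _).antisymm
    (by simpa [hv.mul_initial] using hN.mul_le_right v (star v * v))

theorem map_final (hN : IsPseudoRankFunction N) (hv : IsPartialIsometry v) :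
    N (v * star v) = N v := by
  refine (hN.mul_le_left _ _).antisymm ?_
  have hle := hN.mul_le_left (v * star v) v
  rwa [hv] at hle

theorem star_add_mul_add (h : star v * w = 0) :
    star (v + w) * (v + w) = star v * v + star w * w := by
  simp [mul_add, add_mul, h, star_mul_eq_zero_comm.1 h]

theorem add (hv : IsPartialIsometry v) (hw : IsPartialIsometry w) (hl : star v * w = 0)
    (hr : v * star w = 0) : IsPartialIsometry (v + w) := by
  have hr' := mul_star_eq_zero_comm.1 hr
  rw [IsPartialIsometry, mul_assoc, star_add_mul_add hl, mul_add, add_mul, add_mul,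
    hv.mul_initial, hw.mul_initial, ← mul_assoc w, hr', ← mul_assoc v, hr]
  simp

theorem le_add (hv : IsPartialIsometry v) (hl : star v * w = 0) (hr : v * star w = 0) :
    PartialIsometryLE v (v + w) := by
  have hr' := mul_star_eq_zero_comm.1 hr
  refine ⟨?_, ?_⟩
  · rw [add_mul, hv.mul_initial, ← mul_assoc, hr', zero_mul, add_zero]
  · rw [star_add_mul_add hl, add_mul, hv.isStarProjection_initial.isIdempotentElem.eq, mul_assoc,
      ← mul_assoc w, hr', zero_mul, mul_zero, add_zero]

theorem star_mul_eq_zero_of_sub_final_mul (hv : IsPartialIsometry v) {f : Q}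
    (hf : IsStarProjection f) (hfv : f * v = v) (hw : (f - v * star v) * w = w) :
    star v * w = 0 := by
  rw [← hw, ← mul_assoc, mul_sub, (mul_eq_right_iff_star_mul_eq_left hf).1 hfv, ← mul_assoc,
    hv.initial_mul_star, sub_self, zero_mul]

theorem mul_star_eq_zero_of_mul_sub_initial (hv : IsPartialIsometry v) {e : Q}
    (he : IsStarProjection e) (hve : v * e = v) (hw : w * (e - star v * v) = w) :
    v * star w = 0 := by
  have hproj := hv.isStarProjection_initial.sub_of_mul_eq_left he (by rw [mul_assoc, hve])
  simpa using hv.star.star_mul_eq_zero_of_sub_final_mul (w := star w) he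
    ((mul_eq_left_iff_mul_star_eq_right he).1 hve)
    (by simpa using (mul_eq_left_iff_mul_star_eq_right hproj).1 hw)

end IsPartialIsometry

namespace PartialIsometryLE

variable {Q : Type*} [Ring Q] [StarRing Q] {u v w : Q}

theorem refl (hv : IsPartialIsometry v) : PartialIsometryLE v v :=
  ⟨hv.mul_initial, hv.isStarProjection_initial.isIdempotentElem.eq⟩

instance : IsTrans Q PartialIsometryLE where
  trans u v w huv hvw :=
    ⟨by rw [← huv.initial_mul_initial, ← mul_assoc, hvw.mul_initial, huv.mul_initial],
      by rw [← huv.initial_mul_initial, ← mul_assoc, hvw.initial_mul_initial]⟩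

theorem initial_mul_initial' (h : PartialIsometryLE v w) :
    star v * v * (star w * w) = star v * v := by
  simpa [mul_assoc] using congrArg star h.initial_mul_initial

theorem antisymm (hw : IsPartialIsometry w) (hvw : PartialIsometryLE v w)
    (hwv : PartialIsometryLE w v) : v = w := by
  have hinit : star v * v = star w * w :=
    hvw.initial_mul_initial'.symm.trans hwv.initial_mul_initial
  rw [← hvw.mul_initial, hinit, hw.mul_initial]

theorem star_mul_eq (h : PartialIsometryLE v w) :
    star v * w = star v * v * (star w * w) := by
  have hstar : star v = star v * v * star w := by
    simpa [mul_assoc] using congrArg star h.mul_initial.symm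
  rw [← mul_assoc, ← hstar]

end PartialIsometryLE

/-! ### Suprema in self-injective rings with proper involution -/

section SelfInjective

variable {Q : Type*} [Ring Q]

theorem exists_forall_eq_mul_of_ker_le (hI : Module.Injective Q Q) {M : Type*} [AddCommGroup M]
    [Module Q M] {f g : M →ₗ[Q] Q} (h : LinearMap.ker f ≤ LinearMap.ker g) :
    ∃ x : Q, ∀ m, g m = f m * x := by
  obtain ⟨G, hG⟩ := Module.Baer.of_injective hI (LinearMap.range f)
    ((LinearMap.ker f).liftQ g h ∘ₗ f.quotKerEquivRange.symm)
  refine ⟨G 1, fun m => ?_⟩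
  have hGm := hG (f m) (LinearMap.mem_range_self f m)
  rw [LinearMap.comp_apply, LinearEquiv.coe_coe, LinearMap.quotKerEquivRange_symm_apply_image,
    Submodule.mkQ_apply, Submodule.liftQ_apply] at hGm
  rw [← hGm, ← smul_eq_mul, ← map_smul, smul_eq_mul, mul_one]

variable [StarRing Q]

theorem exists_forall_mul_eq_of_finset (hI : Module.Injective Q Q) {ι : Type*} {p x : ι → Q}
    (h : ∀ s : Finset ι, ∃ w, ∀ i ∈ s, w * p i = x i) : ∃ w, ∀ i, w * p i = x i := by
  have hker : LinearMap.ker (Finsupp.linearCombination Q fun i => star (p i)) ≤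
      LinearMap.ker (Finsupp.linearCombination Q fun i => star (x i)) := by
    intro m hm
    obtain ⟨w, hw⟩ := h m.support
    rw [LinearMap.mem_ker, Finsupp.linearCombination_apply, Finsupp.sum] at hm ⊢
    calc ∑ i ∈ m.support, m i • star (x i)
        = (∑ i ∈ m.support, m i • star (p i)) * star w := by
          rw [Finset.sum_mul]
          exact Finset.sum_congr rfl fun i hi => by simp [← hw i hi, mul_assoc]
      _ = 0 := by rw [hm, zero_mul]
  obtain ⟨y, hy⟩ := exists_forall_eq_mul_of_ker_le hI hker
  refine ⟨star y, fun i => star_injective ?_⟩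
  simpa using (hy (Finsupp.single i 1)).symm

/-- `e` is the left support projection of `S`: the smallest projection fixing every element of `S`
from the left, equivalently the one with the same left annihilator as `S`. -/
structure IsLeftSupport (S : Set Q) (e : Q) : Prop where
  isStarProjection : IsStarProjection e
  mul_eq : ∀ s ∈ S, e * s = s
  mul_eq_zero : ∀ z, (∀ s ∈ S, z * s = 0) → z * e = 0

theorem IsLeftSupport.mul_eq_mul {S : Set Q} {e y z : Q} (he : IsLeftSupport S e)
    (h : ∀ s ∈ S, y * s = z * s) : y * e = z * e := by
  rw [← sub_eq_zero, ← sub_mul]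
  exact he.mul_eq_zero _ fun s hs => by rw [sub_mul, h s hs, sub_self]

theorem mul_star_eq_zero_of_mem_span {S : Set Q} {i k : Q}
    (hi : i ∈ Submodule.span Q (star '' S)) (hk : ∀ s ∈ S, k * s = 0) : k * star i = 0 := by
  induction hi using Submodule.span_induction with
  | mem _ hx =>
    obtain ⟨s, hs, rfl⟩ := hx
    rw [star_star, hk s hs]
  | zero => rw [star_zero, mul_zero]
  | add _ _ _ _ hx hy => rw [star_add, mul_add, hx, hy, add_zero]
  | smul _ _ _ hx => rw [smul_eq_mul, star_mul, ← mul_assoc, hx, zero_mul]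

theorem exists_star_mul_eq_and_annihilates (hI : Module.Injective Q Q) (hP : ProperStar Q)
    (S : Set Q) :
    ∃ x : Q, (∀ s ∈ S, star s * x = star s) ∧ ∀ k, (∀ s ∈ S, k * s = 0) → k * x = 0 := by
  let I : Submodule Q Q := Submodule.span Q (star '' S)
  let K : Submodule Q Q :=
    { carrier := {z | ∀ s ∈ S, z * s = 0}
      add_mem' := fun ha hb s hs => by rw [add_mul, ha s hs, hb s hs, add_zero]
      zero_mem' := fun s _ => zero_mul s
      smul_mem' := fun c a ha s hs => by rw [smul_eq_mul, mul_assoc, ha s hs, mul_zero] }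
  have hker : LinearMap.ker (I.subtype.coprod K.subtype) ≤ LinearMap.ker (I.subtype.coprod 0) := by
    rintro ⟨⟨i, hi⟩, ⟨k, hk⟩⟩ hik
    have hik' : i = -k := eq_neg_of_add_eq_zero_left (by simpa using hik)
    suffices i = 0 by simpa using this
    refine hP.eq_zero_of_mul_star_self ?_
    nth_rewrite 1 [hik']
    rw [neg_mul, mul_star_eq_zero_of_mem_span hi hk, neg_zero]
  obtain ⟨x, hx⟩ := exists_forall_eq_mul_of_ker_le hI hker
  refine ⟨x, fun s hs => ?_, fun k hk => ?_⟩
  · simpa using (hx (⟨star s, Submodule.subset_span ⟨s, hs, rfl⟩⟩, 0)).symm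
  · simpa using (hx (0, ⟨k, hk⟩)).symm

theorem exists_isLeftSupport (hI : Module.Injective Q Q) (hP : ProperStar Q) (S : Set Q) :
    ∃ e : Q, IsLeftSupport S e := by
  obtain ⟨x, hfix, hann⟩ := exists_star_mul_eq_and_annihilates hI hP S
  have hfix' : ∀ s ∈ S, star x * s = s := fun s hs => by simpa using congrArg star (hfix s hs)
  have hxx : star x * x = x := by
    rw [← sub_eq_zero, ← sub_one_mul]
    exact hann _ fun s hs => by rw [sub_one_mul, hfix' s hs, sub_self]
  have hx : star x = x := by rw [← hxx, star_mul, star_star]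
  rw [hx] at hxx hfix'
  exact ⟨x, ⟨hxx, hx⟩, hfix', hann⟩

/-- `V` is the supremum of a set `S` of partial isometries: a common extension of the elements of
`S` whose left and right annihilators contain those of `S`. -/
structure IsPartialIsometrySup (S : Set Q) (V : Q) : Prop where
  isPartialIsometry : IsPartialIsometry V
  le : ∀ v ∈ S, PartialIsometryLE v V
  left_mul_eq_zero : ∀ z, (∀ v ∈ S, z * v = 0) → z * V = 0
  mul_right_eq_zero : ∀ z, (∀ v ∈ S, v * z = 0) → V * z = 0

namespace IsPartialIsometrySup

variable {S : Set Q} {V p : Q}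

theorem left_mul_eq (hV : IsPartialIsometrySup S V) (h : ∀ v ∈ S, p * v = v) : p * V = V := by
  rw [← sub_eq_zero, ← sub_one_mul]
  exact hV.left_mul_eq_zero _ fun v hv => by rw [sub_one_mul, h v hv, sub_self]

theorem mul_right_eq (hV : IsPartialIsometrySup S V) (h : ∀ v ∈ S, v * p = v) : V * p = V := by
  rw [← sub_eq_zero, ← mul_sub_one]
  exact hV.mul_right_eq_zero _ fun v hv => by rw [mul_sub_one, h v hv, sub_self]

theorem mul_self_eq_zero (hV : IsPartialIsometrySup S V) (hS : ∀ v ∈ S, IsPartialIsometry v)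
    (hc : IsChain PartialIsometryLE S) (hsq : ∀ v ∈ S, v * v = 0) : V * V = 0 := by
  refine hV.left_mul_eq_zero _ fun w hw => hV.mul_right_eq_zero _ fun v hv => ?_
  by_cases hvw : v = w
  · rw [hvw, hsq w hw]
  rcases hc hv hw hvw with h | h
  · calc v * w = v * (star v * v * (star w * w)) * w := by
          rw [h.initial_mul_initial', (hS v hv).mul_initial]
      _ = v * (star v * v) * star w * (w * w) := by simp only [mul_assoc]
      _ = 0 := by rw [hsq w hw, mul_zero]
  · rw [← h.mul_initial, ← mul_assoc, hsq v hv, zero_mul]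

end IsPartialIsometrySup

theorem exists_forall_finset_mul_initial_eq {S : Set Q} (hS : ∀ v ∈ S, IsPartialIsometry v)
    (hc : IsChain PartialIsometryLE S) (s : Finset S) :
    ∃ w, ∀ v ∈ s, w * (star (v : Q) * v) = v := by
  rcases isEmpty_or_nonempty S with hempty | hne
  · exact ⟨0, fun v => hempty.elim v⟩
  · have hdir : Directed PartialIsometryLE (Subtype.val : S → Q) := fun v w => by
      by_cases hvw : (v : Q) = w
      · exact ⟨v, .refl (hS v v.2), hvw ▸ .refl (hS v v.2)⟩
      · rcases hc v.2 w.2 hvw with h | h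
        · exact ⟨w, h, .refl (hS w w.2)⟩
        · exact ⟨v, .refl (hS v v.2), h⟩
    obtain ⟨w, hw⟩ := hdir.finset_le s
    exact ⟨w, fun v hv => (hw v hv).mul_initial⟩

theorem star_mul_eq_initial_mul_initial_of_isChain {S : Set Q}
    (hS : ∀ v ∈ S, IsPartialIsometry v) (hc : IsChain PartialIsometryLE S) {v w : Q} (hv : v ∈ S)
    (hw : w ∈ S) : star v * w = star v * v * (star w * w) := by
  by_cases hvw : v = w
  · rw [← hvw, (hS v hv).isStarProjection_initial.isIdempotentElem.eq]
  · rcases hc hv hw hvw with h | h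
    · exact h.star_mul_eq
    · simpa [mul_assoc] using congrArg star h.star_mul_eq

theorem exists_isPartialIsometrySup (hI : Module.Injective Q Q) (hP : ProperStar Q) {S : Set Q}
    (hS : ∀ v ∈ S, IsPartialIsometry v) (hc : IsChain PartialIsometryLE S) :
    ∃ V, IsPartialIsometrySup S V := by
  obtain ⟨x, hx⟩ := exists_forall_mul_eq_of_finset hI (exists_forall_finset_mul_initial_eq hS hc)
  replace hx : ∀ v ∈ S, x * (star v * v) = v := fun v hv => hx ⟨v, hv⟩
  obtain ⟨f, hf⟩ := exists_isLeftSupport hI hP ((fun v => star v * v) '' S)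
  have hff := hf.isStarProjection
  have hfv : ∀ v ∈ S, f * (star v * v) = star v * v := fun v hv => hf.mul_eq _ ⟨v, hv, rfl⟩
  have hmul : ∀ v ∈ S, x * f * (star v * v) = v := fun v hv => by
    rw [mul_assoc, hfv v hv, hx v hv]
  have hstar : ∀ v ∈ S, star (x * f) * v = star v * v := fun v hv => by
    have heq : star v * x * f = star v * v * f := hf.mul_eq_mul fun _ ⟨w, hw, hws⟩ => by
      rw [← hws, mul_assoc, hx w hw, star_mul_eq_initial_mul_initial_of_isChain hS hc hv hw]
    have := (mul_eq_right_iff_mul_eq_left hff (hS v hv).isStarProjection_initial).1 (hfv v hv)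
    simpa [mul_assoc, this] using congrArg star (heq.trans this)
  have hinit : star (x * f) * (x * f) = f := by
    have heq : star (x * f) * x * f = 1 * f := hf.mul_eq_mul fun _ ⟨v, hv, hvs⟩ => by
      rw [← hvs, mul_assoc, hx v hv, hstar v hv, one_mul]
    rw [← mul_assoc, heq, one_mul]
  refine ⟨x * f, .of_initial hP (hinit.symm ▸ hff), fun v hv => ⟨hmul v hv, ?_⟩, fun z hz => ?_,
    fun z hz => ?_⟩
  · rw [hinit, hfv v hv]
  · rw [← mul_assoc]
    exact hf.mul_eq_zero _ fun _ ⟨v, hv, hvs⟩ => by rw [← hvs, mul_assoc, hx v hv, hz v hv]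
  · have hzf : star z * f = 0 := hf.mul_eq_zero _ fun _ ⟨v, hv, hvs⟩ => by
      rw [← hvs, ← mul_assoc, ← star_mul, hz v hv, star_zero, zero_mul]
    rw [mul_assoc, ← star_star (f * z), star_mul, hff.isSelfAdjoint.star_eq, hzf, star_zero,
      mul_zero]

theorem exists_maximal_partialIsometry (hI : Module.Injective Q Q) (hP : ProperStar Q) {T : Set Q}
    (hT : ∀ v ∈ T, IsPartialIsometry v)
    (hsup : ∀ S ⊆ T, IsChain PartialIsometryLE S → ∀ V, IsPartialIsometrySup S V → V ∈ T) :
    ∃ m ∈ T, ∀ a ∈ T, PartialIsometryLE m a → a = m := by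
  obtain ⟨⟨m, hm⟩, hmax⟩ := exists_maximal_of_chains_bounded (α := T)
    (r := fun v w => PartialIsometryLE (v : Q) w) (fun c hc => by
      have hcT : Subtype.val '' c ⊆ T := Subtype.coe_image_subset T c
      have hchain : IsChain PartialIsometryLE (Subtype.val '' c) :=
        hc.image_of_map_rel _ _ Subtype.val fun _ _ h => h
      obtain ⟨V, hV⟩ := exists_isPartialIsometrySup hI hP (fun v hv => hT v (hcT hv)) hchain
      exact ⟨⟨V, hsup _ hcT hchain V hV⟩, fun a ha => hV.le _ ⟨a, ha, rfl⟩⟩)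
    (fun h h' => _root_.trans h h')
  exact ⟨m, hm, fun a ha h => ((hmax ⟨a, ha⟩ h).antisymm (hT m hm) h)⟩

end SelfInjective

/-! ### Ranked regular rings with involution -/

/-- A von Neumann regular, self-injective ring with proper involution and rank function `N`. Only
left self-injectivity is recorded: the involution exchanges the two sides. -/
structure IsRankedStarRegular (Q : Type*) [Ring Q] [StarRing Q] (N : Q → ℝ) : Prop where
  injective : Module.Injective Q Q
  regular : VNRegular Q
  proper : ProperStar Q
  isRankFunction : IsRankFunction N

namespace IsRankedStarRegular

variable {Q : Type*} [Ring Q] [StarRing Q] {N : Q → ℝ}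

theorem isPseudoRankFunction (C : IsRankedStarRegular Q N) : IsPseudoRankFunction N :=
  C.isRankFunction.1

theorem exists_left_projection (C : IsRankedStarRegular Q N) (x : Q) :
    ∃ e, IsStarProjection e ∧ e * x = x ∧ (∃ y, e = x * y) ∧ N e = N x := by
  obtain ⟨e, he⟩ := exists_isLeftSupport C.injective C.proper {x}
  obtain ⟨y, hy⟩ := C.regular x
  have hex : e * x = x := he.mul_eq x rfl
  have hxe : x * (y * e) = e := by
    have heq : x * y * e = 1 * e := he.mul_eq_mul fun s hs => by
      rw [Set.mem_singleton_iff.1 hs, ← hy, one_mul]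
    rw [← mul_assoc, heq, one_mul]
  refine ⟨e, he.isStarProjection, hex, ⟨_, hxe.symm⟩, le_antisymm ?_ ?_⟩
  · simpa only [hxe] using C.isPseudoRankFunction.mul_le_left x (y * e)
  · simpa only [hex] using C.isPseudoRankFunction.mul_le_left e x

theorem map_star (C : IsRankedStarRegular Q N) (x : Q) : N (star x) = N x := by
  have hle : ∀ z, N (star z) ≤ N z := fun z => by
    obtain ⟨e, he, hez, -, hrank⟩ := C.exists_left_projection z
    rw [← (mul_eq_right_iff_star_mul_eq_left he).1 hez, ← hrank]
    exact C.isPseudoRankFunction.mul_le_right _ _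
  exact (hle x).antisymm (by simpa using hle (star x))

theorem exists_right_projection (C : IsRankedStarRegular Q N) (x : Q) :
    ∃ e, IsStarProjection e ∧ x * e = x ∧ (∃ y, e = y * x) ∧ N e = N x := by
  obtain ⟨e, he, hex, ⟨y, hy⟩, hrank⟩ := C.exists_left_projection (star x)
  refine ⟨e, he, (mul_eq_left_iff_mul_star_eq_right he).2 hex, ⟨star y, ?_⟩, ?_⟩
  · rw [← he.isSelfAdjoint.star_eq, hy, star_mul, star_star]
  · rw [hrank, C.map_star]

theorem exists_subprojection_annihilated (C : IsRankedStarRegular Q N) {g : Q}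
    (hg : IsStarProjection g) (t : Q) :
    ∃ g', IsStarProjection g' ∧ g * g' = g' ∧ t * g' = 0 ∧ N (g - g') ≤ N (t * g) := by
  obtain ⟨r, hr, htr, ⟨y, hy⟩, hrank⟩ := C.exists_right_projection (t * g)
  have hrg : r * g = r := by rw [hy, mul_assoc, mul_assoc, hg.isIdempotentElem.eq]
  have hgr : g * r = r := (mul_eq_right_iff_mul_eq_left hg hr).2 hrg
  refine ⟨g - r, hr.sub_of_mul_eq_right hg hgr, ?_, ?_, ?_⟩
  · rw [mul_sub, hg.isIdempotentElem.eq, hgr]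
  · rw [← hgr, mul_sub, ← mul_assoc, htr, sub_self]
  · rw [sub_sub_cancel, hrank]

end IsRankedStarRegular

/-! ### Comparability and halving of projections -/

theorem exists_seq_forall_rel {α : Type*} {P : ℕ → α → Prop} {r : ℕ → α → α → Prop}
    (hzero : ∃ a, P 0 a) (hsucc : ∀ n a, P n a → ∃ b, P (n + 1) b ∧ r n a b) :
    ∃ f : ℕ → α, (∀ n, P n (f n)) ∧ ∀ n, r n (f n) (f (n + 1)) := by
  choose! next hP hr using hsucc
  obtain ⟨a, ha⟩ := hzero
  have hall : ∀ n, P n (Nat.rec a next n) := fun n => by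
    induction n with
    | zero => exact ha
    | succ n ih => exact hP n _ ih
  exact ⟨fun n => Nat.rec a next n, hall, fun n => hr n _ (hall n)⟩

/-- A ranked *-regular ring that behaves like a factor of type II: any two nonzero projections have
nonzero equivalent subprojections, and no projection is minimal. -/
structure IsDiffuseStarFactor (Q : Type*) [Ring Q] [StarRing Q] (N : Q → ℝ) : Prop
    extends IsRankedStarRegular Q N where
  exists_partialIsometry : ∀ e f : Q, IsStarProjection e → IsStarProjection f → e ≠ 0 → f ≠ 0 →
    ∃ v, v ≠ 0 ∧ IsPartialIsometry v ∧ e * v = v ∧ v * f = v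
  exists_proper_subprojection : ∀ p : Q, IsStarProjection p → p ≠ 0 →
    ∃ q, IsStarProjection q ∧ p * q = q ∧ q ≠ 0 ∧ q ≠ p

namespace IsDiffuseStarFactor

variable {Q : Type*} [Ring Q] [StarRing Q] {N : Q → ℝ} {e f g p p' u : Q}

theorem exists_maximal_between (C : IsDiffuseStarFactor Q N) (e f : Q) :
    ∃ m, (IsPartialIsometry m ∧ f * m = m ∧ m * e = m) ∧
      ∀ a, IsPartialIsometry a → f * a = a → a * e = a → PartialIsometryLE m a → a = m := by
  obtain ⟨m, hm, hmax⟩ := exists_maximal_partialIsometry C.injective C.proper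
    (T := {v | IsPartialIsometry v ∧ f * v = v ∧ v * e = v}) (fun v hv => hv.1)
    fun S hS _ V hV => ⟨hV.isPartialIsometry, hV.left_mul_eq fun v hv => (hS hv).2.1,
      hV.mul_right_eq fun v hv => (hS hv).2.2⟩
  exact ⟨m, hm, fun a ha hfa hae => hmax a ⟨ha, hfa, hae⟩⟩

theorem exists_partialIsometry_of_le (C : IsDiffuseStarFactor Q N) (he : IsStarProjection e)
    (hf : IsStarProjection f) (hN : N e ≤ N f) :
    ∃ v, IsPartialIsometry v ∧ star v * v = e ∧ f * v = v := by
  obtain ⟨m, ⟨hm, hfm, hme⟩, hmax⟩ := C.exists_maximal_between e f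
  have hem : e * (star m * m) = star m * m := by
    rw [← mul_assoc, (mul_eq_left_iff_mul_star_eq_right he).1 hme]
  have hfm' : f * (m * star m) = m * star m := by rw [← mul_assoc, hfm]
  have he' := hm.isStarProjection_initial.sub_of_mul_eq_right he hem
  have hf' := hm.isStarProjection_final.sub_of_mul_eq_right hf hfm'
  by_cases hinit : e - star m * m = 0
  · exact ⟨m, hm, (sub_eq_zero.1 hinit).symm, hfm⟩
  have hfin : f - m * star m ≠ 0 := fun hzero => by
    have hpos := C.isRankFunction.pos hinit
    rw [C.isPseudoRankFunction.map_sub_projection he hm.isStarProjection_initial hem,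
      hm.map_initial C.isPseudoRankFunction] at hpos
    rw [sub_eq_zero.1 hzero, hm.map_final C.isPseudoRankFunction] at hN
    linarith
  obtain ⟨v, hv0, hv, hfv, hve⟩ := C.exists_partialIsometry _ _ hf' he' hfin hinit
  have hl : star m * v = 0 := hm.star_mul_eq_zero_of_sub_final_mul hf hfm hfv
  have hr : m * star v = 0 := hm.mul_star_eq_zero_of_mul_sub_initial he hme hve
  have hfv' : f * v = v := by
    rw [← hfv, ← mul_assoc, mul_sub, hf.isIdempotentElem.eq, hfm']
  have hve' : v * e = v := by
    rw [← hve, mul_assoc, sub_mul, he.isIdempotentElem.eq, mul_assoc, hme]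
  have hadd := hmax (m + v) (hm.add hv hl hr) (by rw [mul_add, hfm, hfv'])
    (by rw [add_mul, hme, hve']) (hm.le_add hl hr)
  exact absurd (by simpa using hadd) hv0

theorem exists_partialIsometry_extension (C : IsDiffuseStarFactor Q N) (hg : IsStarProjection g)
    (hp' : IsStarProjection p') (hu : IsPartialIsometry u) (hgu : g * u = u)
    (hpp' : p' * (star u * u) = star u * u) (hN : N p' ≤ N g) :
    ∃ w, IsPartialIsometry w ∧ star w * w = p' ∧ g * w = w ∧ PartialIsometryLE u w := by
  have hgu' : g * (u * star u) = u * star u := by rw [← mul_assoc, hgu]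
  have hup' : u * p' = u := by
    rw [← hu.mul_initial, mul_assoc,
      (mul_eq_right_iff_mul_eq_left hp' hu.isStarProjection_initial).1 hpp']
  obtain ⟨v, hv, hvinit, hvfin⟩ := C.exists_partialIsometry_of_le
    (hu.isStarProjection_initial.sub_of_mul_eq_right hp' hpp')
    (hu.isStarProjection_final.sub_of_mul_eq_right hg hgu') (by
      rw [C.isPseudoRankFunction.map_sub_projection hp' hu.isStarProjection_initial hpp',
        C.isPseudoRankFunction.map_sub_projection hg hu.isStarProjection_final hgu',
        hu.map_initial C.isPseudoRankFunction, hu.map_final C.isPseudoRankFunction]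
      linarith)
  have hl : star u * v = 0 := hu.star_mul_eq_zero_of_sub_final_mul hg hgu hvfin
  have hr : u * star v = 0 :=
    hu.mul_star_eq_zero_of_mul_sub_initial hp' hup' (by rw [← hvinit, hv.mul_initial])
  refine ⟨u + v, hu.add hv hl hr, ?_, ?_, hu.le_add hl hr⟩
  · rw [IsPartialIsometry.star_add_mul_add hl, hvinit, add_sub_cancel]
  · rw [mul_add, hgu]
    nth_rewrite 1 [← hvfin]
    rw [← mul_assoc, mul_sub, hg.isIdempotentElem.eq, hgu', hvfin]

theorem exists_maximal_square_zero (C : IsDiffuseStarFactor Q N) (p : Q) :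
    ∃ m, (IsPartialIsometry m ∧ p * m = m ∧ m * p = m ∧ m * m = 0) ∧
      ∀ a, IsPartialIsometry a → p * a = a → a * p = a → a * a = 0 → PartialIsometryLE m a →
        a = m := by
  obtain ⟨m, hm, hmax⟩ := exists_maximal_partialIsometry C.injective C.proper
    (T := {v | IsPartialIsometry v ∧ p * v = v ∧ v * p = v ∧ v * v = 0}) (fun v hv => hv.1)
    fun S hS hc V hV => ⟨hV.isPartialIsometry, hV.left_mul_eq fun v hv => (hS hv).2.1,
      hV.mul_right_eq fun v hv => (hS hv).2.2.1,
      hV.mul_self_eq_zero (fun v hv => (hS hv).1) hc fun v hv => (hS hv).2.2.2⟩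
  exact ⟨m, hm, fun a ha hpa hap hsq => hmax a ⟨ha, hpa, hap, hsq⟩⟩

theorem exists_square_zero_partialIsometry (C : IsDiffuseStarFactor Q N) (hp : IsStarProjection p)
    (hp0 : p ≠ 0) :
    ∃ v, v ≠ 0 ∧ IsPartialIsometry v ∧ p * v = v ∧ v * p = v ∧ v * v = 0 := by
  obtain ⟨q, hq, hpq, hq0, hqp⟩ := C.exists_proper_subprojection p hp hp0
  obtain ⟨v, hv0, hv, hqv, hvq⟩ := C.exists_partialIsometry q (p - q) hq
    (hq.sub_of_mul_eq_right hp hpq) hq0 fun h => hqp (sub_eq_zero.1 h).symm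
  refine ⟨v, hv0, hv, ?_, ?_, ?_⟩
  · rw [← hqv, ← mul_assoc, hpq]
  · rw [← hvq, mul_assoc, sub_mul, hp.isIdempotentElem.eq,
      (mul_eq_right_iff_mul_eq_left hp hq).1 hpq]
  · calc v * v = v * (p - q) * (q * v) := by rw [hqv, hvq]
      _ = v * ((p - q) * q) * v := by simp only [mul_assoc]
      _ = 0 := by rw [sub_mul, hpq, hq.isIdempotentElem.eq, sub_self, mul_zero, zero_mul]

theorem exists_square_zero_initial_add_final_eq (C : IsDiffuseStarFactor Q N)
    (hp : IsStarProjection p) :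
    ∃ m, IsPartialIsometry m ∧ m * m = 0 ∧ star m * m + m * star m = p := by
  obtain ⟨m, ⟨hm, hpm, hmp, hmm⟩, hmax⟩ := C.exists_maximal_square_zero p
  have horth : star m * m * (m * star m) = 0 := by
    rw [mul_assoc, ← mul_assoc m, hmm, zero_mul, mul_zero]
  have hsum := hm.isStarProjection_initial.add hm.isStarProjection_final horth
  have hpsum : p * (star m * m + m * star m) = star m * m + m * star m := by
    rw [mul_add, ← mul_assoc, (mul_eq_left_iff_mul_star_eq_right hp).1 hmp, ← mul_assoc p m, hpm]
  have hh := hsum.sub_of_mul_eq_right hp hpsum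
  refine ⟨m, hm, hmm, ?_⟩
  by_contra hne
  obtain ⟨h, hdef⟩ : ∃ h, h = p - (star m * m + m * star m) := ⟨_, rfl⟩
  rw [← hdef] at hh
  obtain ⟨v, hv0, hv, hhv, hvh, hvv⟩ := C.exists_square_zero_partialIsometry hh
    fun h0 => hne (sub_eq_zero.1 (hdef.symm.trans h0)).symm
  have hmh : m * h = 0 := by
    rw [hdef, mul_sub, mul_add, hmp, hm.mul_initial, ← mul_assoc, hmm, zero_mul, add_zero, sub_self]
  have hhm : h * m = 0 := by
    rw [hdef, sub_mul, add_mul, hpm, hm, mul_assoc, hmm, mul_zero, zero_add, sub_self]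
  have hph : p * h = h := by rw [hdef, mul_sub, hp.isIdempotentElem.eq, hpsum]
  have hhp : h * p = h := (mul_eq_right_iff_mul_eq_left hp hh).1 hph
  have hmv : m * v = 0 := by rw [← hhv, ← mul_assoc, hmh, zero_mul]
  have hvm : v * m = 0 := by rw [← hvh, mul_assoc, hhm, mul_zero]
  have hl : star m * v = 0 := by
    rw [star_mul_eq_zero_comm, ← (mul_eq_right_iff_star_mul_eq_left hh).1 hhv, mul_assoc, hhm,
      mul_zero]
  have hr : m * star v = 0 := by
    rw [← (mul_eq_left_iff_mul_star_eq_right hh).1 hvh, ← mul_assoc, hmh, zero_mul]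
  have hadd := hmax (m + v) (hm.add hv hl hr) (by rw [mul_add, hpm, ← hhv, ← mul_assoc, hph])
    (by rw [add_mul, hmp, ← hvh, mul_assoc, hhp])
    (by simp [mul_add, add_mul, hmm, hvv, hmv, hvm]) (hm.le_add hl hr)
  exact hv0 (by simpa using hadd)

theorem exists_subprojection_half (C : IsDiffuseStarFactor Q N) (hp : IsStarProjection p) :
    ∃ q, IsStarProjection q ∧ p * q = q ∧ N q = N p / 2 := by
  obtain ⟨m, hm, hmm, hsum⟩ := C.exists_square_zero_initial_add_final_eq hp
  have hinit := hm.isStarProjection_initial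
  have horth : m * star m * (star m * m) = 0 := by
    rw [mul_assoc, ← mul_assoc (star m), ← star_mul, hmm, star_zero, zero_mul, mul_zero]
  refine ⟨star m * m, hinit, ?_, ?_⟩
  · rw [← hsum, add_mul, hinit.isIdempotentElem.eq, horth, add_zero]
  · have hN := C.isPseudoRankFunction.map_add_projection hm.isStarProjection_final hinit horth
    rw [add_comm, hsum, hm.map_initial C.isPseudoRankFunction,
      hm.map_final C.isPseudoRankFunction] at hN
    rw [hm.map_initial C.isPseudoRankFunction]
    linarith

theorem exists_subprojection_div_two_pow (C : IsDiffuseStarFactor Q N) (hp : IsStarProjection p)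
    (k : ℕ) : ∃ q, IsStarProjection q ∧ p * q = q ∧ N q = N p / 2 ^ k := by
  induction k with
  | zero => exact ⟨p, hp, hp.isIdempotentElem.eq, by simp⟩
  | succ k ih =>
    obtain ⟨q, hq, hpq, hNq⟩ := ih
    obtain ⟨r, hr, hqr, hNr⟩ := C.exists_subprojection_half hq
    exact ⟨r, hr, by rw [← hqr, ← mul_assoc, hpq], by rw [hNr, hNq, pow_succ, div_div]⟩

theorem exists_subprojection_lt (C : IsDiffuseStarFactor Q N) (hp : IsStarProjection p)
    (hp0 : p ≠ 0) {δ : ℝ} (hδ : 0 < δ) :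
    ∃ q, IsStarProjection q ∧ p * q = q ∧ 0 < N q ∧ N q < δ := by
  have hpos := C.isRankFunction.pos hp0
  obtain ⟨k, hk⟩ := pow_unbounded_of_one_lt (N p / δ) one_lt_two
  obtain ⟨q, hq, hpq, hNq⟩ := C.exists_subprojection_div_two_pow hp k
  refine ⟨q, hq, hpq, by rw [hNq]; positivity, ?_⟩
  rw [hNq, div_lt_iff₀ (by positivity)]
  rwa [div_lt_iff₀' hδ] at hk

end IsDiffuseStarFactor

/-! ### Completeness of the rank metric -/

theorem rankComplete_of_forall_geometric {R : Type*} [Ring R] {N : R → ℝ}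
    (hN : IsPseudoRankFunction N)
    (h : ∀ x : ℕ → R, (∀ k, N (x (k + 1) - x k) ≤ (1 / 2) ^ k) →
      ∃ y, ∀ n, N (x n - y) ≤ 2 * (1 / 2) ^ n) : RankComplete N := by
  intro u hu
  choose M hM using fun k : ℕ => hu ((1 / 2) ^ k) (by positivity)
  have hle := le_partialSups M
  obtain ⟨y, hy⟩ := h (fun k => u (partialSups M k)) fun k =>
    (hM k _ _ ((hle k).trans ((partialSups M).monotone k.le_succ)) (hle k)).le
  refine ⟨y, fun ε hε => ?_⟩
  obtain ⟨n, hn⟩ := exists_pow_lt_of_lt_one (show 0 < ε / 3 by positivity)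
    (show (1 / 2 : ℝ) < 1 by norm_num)
  refine ⟨M n, fun k hk => ?_⟩
  linarith [hM n k (partialSups M n) hk (hle n), hy n,
    hN.sub_le_sub_add_sub (u k) (u (partialSups M n)) y]

theorem sum_half_pow_add_le (n K : ℕ) :
    ∑ k ∈ Finset.range K, (1 / 2 : ℝ) ^ (n + k) ≤ 2 * (1 / 2) ^ n := by
  have hgeom : ∑ k ∈ Finset.range K, (1 / 2 : ℝ) ^ k ≤ 2 :=
    (summable_geometric_two.sum_le_tsum _ fun _ _ => by positivity).trans_eq tsum_geometric_two
  simp only [pow_add, ← Finset.mul_sum]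
  nlinarith [show (0 : ℝ) < (1 / 2) ^ n by positivity]

namespace IsDiffuseStarFactor

variable {Q : Type*} [Ring Q] [StarRing Q] {N : Q → ℝ} {g : Q}

theorem exists_partialIsometry_seq (C : IsDiffuseStarFactor Q N) {p : ℕ → Q}
    (hp : ∀ k, IsStarProjection (p k)) (hmono : ∀ k, p (k + 1) * p k = p k)
    (hg : IsStarProjection g) (hle : ∀ k, N (p k) ≤ N g) :
    ∃ u : ℕ → Q, (∀ k, IsPartialIsometry (u k) ∧ star (u k) * u k = p k ∧ g * u k = u k) ∧
      ∀ k, PartialIsometryLE (u k) (u (k + 1)) := by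
  refine exists_seq_forall_rel
    (P := fun k u => IsPartialIsometry u ∧ star u * u = p k ∧ g * u = u)
    (r := fun _ u w => PartialIsometryLE u w)
    (C.exists_partialIsometry_of_le (hp 0) hg (hle 0)) ?_
  rintro k u ⟨hu, hinit, hgu⟩
  obtain ⟨w, hw, hwinit, hgw, huw⟩ := C.exists_partialIsometry_extension hg (hp (k + 1)) hu hgu
    (by rw [hinit, hmono]) (hle _)
  exact ⟨w, ⟨hw, hwinit, hgw⟩, huw⟩

theorem map_isLeftSupport_range_le (C : IsDiffuseStarFactor Q N) {p : ℕ → Q}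
    (hp : ∀ k, IsStarProjection (p k)) (hmono : ∀ k, p (k + 1) * p k = p k) {P : Q}
    (hP : IsLeftSupport (Set.range p) P) {s : ℝ} (hs : ∀ k, N (p k) ≤ s) : N P ≤ s := by
  have hN := C.isPseudoRankFunction
  -- Otherwise extending partial isometries along the chain embeds `P` into a proper subprojection
  -- `P - h`, which still has rank at least `s`.
  by_contra! hlt
  have hP0 : P ≠ 0 := by
    rintro rfl
    rw [hN.map_zero] at hlt
    linarith [hN.nonneg (p 0), hs 0]
  obtain ⟨h, hh, hPh, hhpos, hhs⟩ := C.exists_subprojection_lt hP.isStarProjection hP0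
    (δ := N P - s) (by linarith)
  have hg := hh.sub_of_mul_eq_right hP.isStarProjection hPh
  have hNg := hN.map_sub_projection hP.isStarProjection hh hPh
  obtain ⟨u, hu, hustep⟩ := C.exists_partialIsometry_seq hp hmono hg
    fun k => by linarith [hs k]
  have humono : ∀ ⦃j k⦄, j ≤ k → PartialIsometryLE (u j) (u k) := fun j k hjk => by
    induction k, hjk using Nat.le_induction with
    | base => exact .refl (hu j).1
    | succ k _ ih => exact _root_.trans ih (hustep k)
  obtain ⟨V, hV⟩ := exists_isPartialIsometrySup C.injective C.proper (S := Set.range u)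
    (Set.forall_mem_range.2 fun k => (hu k).1) (by
      rintro _ ⟨j, rfl⟩ _ ⟨k, rfl⟩ -
      exact (le_total j k).imp (fun h => humono h) fun h => humono h)
  have hgV : (P - h) * V = V := hV.left_mul_eq (Set.forall_mem_range.2 fun k => (hu k).2.2)
  have hVP : star V * V * P = 1 * P := hP.mul_eq_mul <| Set.forall_mem_range.2 fun k => by
    rw [one_mul, ← (hu k).2.1, (hV.le (u k) ⟨k, rfl⟩).initial_mul_initial]
  have hPV : N P ≤ N V := by
    rw [← one_mul P, ← hVP]
    exact hN.mul_mul_le _ _ _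
  have hVg : N V ≤ N (P - h) := by
    rw [← hgV]
    exact hN.mul_le_left _ _
  linarith

theorem exists_projection_of_sum_le (C : IsDiffuseStarFactor Q N) {t : ℕ → Q} {s : ℝ}
    (hs : ∀ K, ∑ k ∈ Finset.range K, N (t k) ≤ s) :
    ∃ g, IsStarProjection g ∧ (∀ k, g * t k = t k) ∧ N g ≤ s := by
  have hN := C.isPseudoRankFunction
  obtain ⟨p, hp, hstep⟩ := exists_seq_forall_rel
    (P := fun K p => IsStarProjection p ∧ N p ≤ ∑ k ∈ Finset.range K, N (t k))
    (r := fun k p p' => p' * p = p ∧ p' * t k = t k) ⟨0, .zero Q, by simp [hN.map_zero]⟩ (by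
      rintro k p ⟨hp, hpN⟩
      obtain ⟨e, he, hefix, ⟨y, hy⟩, heN⟩ := C.exists_left_projection ((1 - p) * t k)
      have hpe : p * e = 0 := by
        rw [hy, ← mul_assoc, ← mul_assoc, hp.mul_one_sub_self, zero_mul, zero_mul]
      have hep := (mul_eq_zero_comm_of_isStarProjection hp he).1 hpe
      refine ⟨p + e, ⟨hp.add he hpe, ?_⟩, ?_, ?_⟩
      · rw [hN.map_add_projection hp he hpe, Finset.sum_range_succ, heN]
        linarith [hN.mul_le_right (1 - p) (t k)]
      · rw [add_mul, hp.isIdempotentElem.eq, hep, add_zero]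
      · have het : e * t k = (1 - p) * t k := by
          rw [← hefix, ← mul_assoc, mul_sub, hep, mul_one, sub_zero]
        rw [add_mul, het, ← add_mul, add_sub_cancel, one_mul])
  obtain ⟨g, hg⟩ := exists_isLeftSupport C.injective C.proper (Set.range p)
  refine ⟨g, hg.isStarProjection, fun k => ?_, C.map_isLeftSupport_range_le
    (fun k => (hp k).1) (fun k => (hstep k).1) hg fun k => (hp k).2.trans (hs k)⟩
  rw [← (hstep k).2, ← mul_assoc, hg.mul_eq _ ⟨k + 1, rfl⟩]

theorem exists_tail_projection (C : IsDiffuseStarFactor Q N) {x : ℕ → Q}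
    (hx : ∀ k, N (x (k + 1) - x k) ≤ (1 / 2) ^ k) (n : ℕ) :
    ∃ g, N g ≤ 2 * (1 / 2) ^ n ∧ ∀ k, n ≤ k → x k * (1 - g) = x n * (1 - g) := by
  obtain ⟨g, hg, hfix, hgN⟩ := C.exists_projection_of_sum_le
    (t := fun k => star (x (n + k + 1) - x (n + k))) (s := 2 * (1 / 2) ^ n) fun K =>
      (Finset.sum_le_sum fun k _ => by rw [C.map_star]; exact hx _).trans (sum_half_pow_add_le n K)
  refine ⟨g, hgN, fun k hk => ?_⟩
  induction k, hk using Nat.le_induction with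
  | base => rfl
  | succ k hk ih =>
    obtain ⟨j, rfl⟩ := Nat.exists_eq_add_of_le hk
    have hfixj := (mul_eq_left_iff_mul_star_eq_right hg).2 (hfix j)
    rw [← ih, ← sub_eq_zero, ← sub_mul, mul_sub, mul_one, hfixj, sub_self]

theorem rankComplete (C : IsDiffuseStarFactor Q N) : RankComplete N := by
  refine rankComplete_of_forall_geometric C.isPseudoRankFunction fun x hx => ?_
  choose g hgN htail using C.exists_tail_projection hx
  obtain ⟨y, hy⟩ := exists_forall_mul_eq_of_finset C.injective
    (p := fun n => 1 - g n) (x := fun n => x n * (1 - g n)) fun s =>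
      ⟨x (s.sup id), fun n hn => htail n _ (Finset.le_sup (f := id) hn)⟩
  refine ⟨y, fun n => ?_⟩
  have hxy : x n - y = (x n - y) * g n := by
    have hzero : (x n - y) * (1 - g n) = 0 := by rw [sub_mul, hy n, sub_self]
    rwa [mul_sub, mul_one, sub_eq_zero] at hzero
  rw [hxy]
  exact (C.isPseudoRankFunction.mul_le_right _ _).trans (hgN n)

end IsDiffuseStarFactor

/-! ### Frames of partial isometries -/

/-- Partial isometries `X i` with initial projections `P i` and pairwise orthogonal ranges. When `P`
is constant, the products `X i * star (X j)` form a system of matrix units. -/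
structure IsFrame {ι Q : Type*} [Ring Q] [StarRing Q] (P X : ι → Q) : Prop where
  isPartialIsometry : ∀ i, IsPartialIsometry (X i)
  star_mul_self : ∀ i, star (X i) * X i = P i
  star_mul_of_ne : ∀ ⦃i j⦄, i ≠ j → star (X i) * X j = 0

/-- The sum of the range projections of a family of partial isometries with orthogonal ranges. -/
def rangeProjection {ι Q : Type*} [Fintype ι] [Ring Q] [StarRing Q] (X : ι → Q) : Q :=
  ∑ i, X i * star (X i)

theorem isStarProjection_sum {ι Q : Type*} [Ring Q] [StarRing Q] {p : ι → Q}
    (hp : ∀ i, IsStarProjection (p i)) (horth : ∀ ⦃i j⦄, i ≠ j → p i * p j = 0) (s : Finset ι) :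
    IsStarProjection (∑ i ∈ s, p i) := by
  classical
  induction s using Finset.induction_on with
  | empty => exact .zero Q
  | insert i s hi ih =>
    rw [Finset.sum_insert hi]
    refine (hp i).add ih ?_
    rw [Finset.mul_sum]
    exact Finset.sum_eq_zero fun j hj => horth (ne_of_mem_of_not_mem hj hi).symm

theorem IsPseudoRankFunction.map_sum_projection {ι Q : Type*} [Ring Q] [StarRing Q] {N : Q → ℝ}
    (hN : IsPseudoRankFunction N) {p : ι → Q} (hp : ∀ i, IsStarProjection (p i))
    (horth : ∀ ⦃i j⦄, i ≠ j → p i * p j = 0) (s : Finset ι) :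
    N (∑ i ∈ s, p i) = ∑ i ∈ s, N (p i) := by
  classical
  induction s using Finset.induction_on with
  | empty => simpa using hN.map_zero
  | insert i s hi ih =>
    rw [Finset.sum_insert hi, Finset.sum_insert hi, ← ih]
    refine hN.map_add_projection (hp i) (isStarProjection_sum hp horth s) ?_
    rw [Finset.mul_sum]
    exact Finset.sum_eq_zero fun j hj => horth (ne_of_mem_of_not_mem hj hi).symm

theorem star_rangeProjection {ι Q : Type*} [Fintype ι] [Ring Q] [StarRing Q] (X : ι → Q) :
    star (rangeProjection X) = rangeProjection X := by
  simp [rangeProjection]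

theorem mul_rangeProjection {ι Q : Type*} [Fintype ι] [Ring Q] [StarRing Q] {X : ι → Q} {g : Q}
    (hg : ∀ i, g * X i = X i) : g * rangeProjection X = rangeProjection X := by
  simp only [rangeProjection, Finset.mul_sum, ← mul_assoc, hg]

theorem rangeProjection_sigma {ι Q : Type*} [Fintype ι] {κ : ι → Type*} [∀ i, Fintype (κ i)]
    [Ring Q] [StarRing Q] (X : ι → Q) (d : ∀ i, κ i → Q) :
    rangeProjection (fun z : Σ i, κ i => X z.1 * d z.1 z.2) =
      ∑ i, X i * rangeProjection (d i) * star (X i) := by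
  simp only [rangeProjection, Fintype.sum_sigma, Finset.mul_sum, Finset.sum_mul, star_mul,
    mul_assoc]

theorem mul_eq_of_sub_mul_eq {Q : Type*} [Ring Q] {g p v : Q} (hg : IsIdempotentElem g)
    (hp : g * p = p) (hv : (g - p) * v = v) : g * v = v := by
  rw [← hv, ← mul_assoc, mul_sub, hg.eq, hp]

namespace IsFrame

variable {ι κ Q : Type*} [Ring Q] [StarRing Q] {P X : ι → Q}

theorem mul_initial (hX : IsFrame P X) (i : ι) : X i * P i = X i := by
  rw [← hX.star_mul_self, (hX.isPartialIsometry i).mul_initial]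

theorem initial_mul_star (hX : IsFrame P X) (i : ι) : P i * star (X i) = star (X i) := by
  rw [← hX.star_mul_self, (hX.isPartialIsometry i).initial_mul_star]

theorem comp (hX : IsFrame P X) {f : κ → ι} (hf : f.Injective) : IsFrame (P ∘ f) (X ∘ f) where
  isPartialIsometry i := hX.isPartialIsometry (f i)
  star_mul_self i := hX.star_mul_self (f i)
  star_mul_of_ne _ _ hij := hX.star_mul_of_ne (hf.ne hij)

theorem map {F R : Type*} [CommSemiring F] [Ring R] [StarRing R] [Algebra F Q] [Algebra F R]
    (hX : IsFrame P X) (Θ : Q →⋆ₐ[F] R) : IsFrame (Θ ∘ P) (Θ ∘ X) where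
  isPartialIsometry i := (hX.isPartialIsometry i).map Θ
  star_mul_self i := by simpa [map_star] using congrArg Θ (hX.star_mul_self i)
  star_mul_of_ne i j hij := by simpa [map_star] using congrArg Θ (hX.star_mul_of_ne hij)

theorem sumElim {P : ι ⊕ κ → Q} {Y : κ → Q} (hX : IsFrame (P ∘ .inl) X)
    (hY : IsFrame (P ∘ .inr) Y) (horth : ∀ i j, star (X i) * Y j = 0) :
    IsFrame P (Sum.elim X Y) where
  isPartialIsometry := Sum.rec hX.isPartialIsometry hY.isPartialIsometry
  star_mul_self := Sum.rec hX.star_mul_self hY.star_mul_self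
  star_mul_of_ne := by
    rintro (i | i) (j | j) hij
    · exact hX.star_mul_of_ne fun h => hij (congrArg _ h)
    · exact horth i j
    · exact (star_mul_eq_zero_comm).1 (horth j i)
    · exact hY.star_mul_of_ne fun h => hij (congrArg _ h)

theorem mul_left (hX : IsFrame P X) {w : Q} (hw : ∀ i, star w * w * X i = X i) :
    IsFrame P fun i => w * X i := by
  have hstar (i j) : star (w * X i) * (w * X j) = star (X i) * X j := by
    rw [star_mul, mul_assoc, ← mul_assoc (star w), hw]
  refine ⟨fun i => ?_, fun i => ?_, fun i j hij => ?_⟩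
  · rw [IsPartialIsometry, mul_assoc, hstar, mul_assoc, (hX.isPartialIsometry i).mul_initial]
  · rw [hstar, hX.star_mul_self]
  · rw [hstar, hX.star_mul_of_ne hij]

theorem final_mul_final_of_ne (hX : IsFrame P X) ⦃i j : ι⦄ (hij : i ≠ j) :
    X i * star (X i) * (X j * star (X j)) = 0 := by
  rw [mul_assoc, ← mul_assoc (star (X i)), hX.star_mul_of_ne hij, zero_mul, mul_zero]

theorem sigma {κ : ι → Type*} {h d : ∀ i, κ i → Q} (hX : IsFrame P X)
    (hd : ∀ i, IsFrame (h i) (d i)) (hPd : ∀ i s, P i * d i s = d i s) :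
    IsFrame (fun z : Σ i, κ i => h z.1 z.2) fun z => X z.1 * d z.1 z.2 := by
  have hself (i) := (hd i).mul_left (w := X i) fun s => by rw [hX.star_mul_self, hPd]
  refine ⟨fun ⟨i, s⟩ => (hself i).isPartialIsometry s, fun ⟨i, s⟩ => (hself i).star_mul_self s, ?_⟩
  rintro ⟨i, s⟩ ⟨j, t⟩ hne
  by_cases hij : i = j
  · subst hij
    exact (hself i).star_mul_of_ne (i := s) (j := t) fun hst => hne (hst ▸ rfl)
  · rw [star_mul, mul_assoc, ← mul_assoc (star (X i)), hX.star_mul_of_ne hij, zero_mul, mul_zero]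

variable [Fintype ι]

theorem rangeProjection_mul (hX : IsFrame P X) (i : ι) : rangeProjection X * X i = X i := by
  rw [rangeProjection, Finset.sum_mul, Finset.sum_eq_single i _ (by simp)]
  · exact hX.isPartialIsometry i
  · intro j _ hji
    rw [mul_assoc, hX.star_mul_of_ne hji, mul_zero]

theorem star_mul_rangeProjection (hX : IsFrame P X) (i : ι) :
    star (X i) * rangeProjection X = star (X i) := by
  simpa [star_rangeProjection] using congrArg star (hX.rangeProjection_mul i)

theorem isStarProjection_rangeProjection (hX : IsFrame P X) :
    IsStarProjection (rangeProjection X) :=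
  isStarProjection_sum (fun i => (hX.isPartialIsometry i).isStarProjection_final)
    hX.final_mul_final_of_ne _

theorem map_rangeProjection (hX : IsFrame P X) {N : Q → ℝ} (hN : IsPseudoRankFunction N) :
    N (rangeProjection X) = ∑ i, N (P i) := by
  refine (hN.map_sum_projection (fun i => (hX.isPartialIsometry i).isStarProjection_final)
    hX.final_mul_final_of_ne _).trans (Finset.sum_congr rfl fun i _ => ?_)
  rw [(hX.isPartialIsometry i).map_final hN, ← hX.star_mul_self,
    (hX.isPartialIsometry i).map_initial hN]

theorem map_sub_rangeProjection (hX : IsFrame P X) {N : Q → ℝ} (hN : IsPseudoRankFunction N)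
    {g : Q} (hg : IsStarProjection g) (hgX : ∀ i, g * X i = X i) :
    N (g - rangeProjection X) = N g - ∑ i, N (P i) := by
  rw [hN.map_sub_projection hg hX.isStarProjection_rangeProjection (mul_rangeProjection hgX),
    hX.map_rangeProjection hN]

theorem star_mul_eq_zero_of_sub_rangeProjection_mul (hX : IsFrame P X) {g v : Q}
    (hg : IsStarProjection g) (hgX : ∀ i, g * X i = X i)
    (hv : (g - rangeProjection X) * v = v) (i : ι) : star (X i) * v = 0 := by
  rw [← hv, ← mul_assoc, mul_sub, (mul_eq_right_iff_star_mul_eq_left hg).1 (hgX i),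
    hX.star_mul_rangeProjection, sub_self, zero_mul]

end IsFrame

namespace IsDiffuseStarFactor

variable {Q : Type*} [Ring Q] [StarRing Q] {N : Q → ℝ} {g h : Q}

theorem exists_frame (C : IsDiffuseStarFactor Q N) (hh : IsStarProjection h)
    (hg : IsStarProjection g) {n : ℕ} (hn : n * N h ≤ N g) :
    ∃ c : Fin n → Q, IsFrame (fun _ => h) c ∧ ∀ i, g * c i = c i := by
  have hN := C.isPseudoRankFunction
  induction n with
  | zero => exact ⟨0, ⟨Fin.rec0, Fin.rec0, Fin.rec0⟩, Fin.rec0⟩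
  | succ n ih =>
    push_cast at hn
    obtain ⟨c, hc, hgc⟩ := ih (by linarith [hN.nonneg h])
    have hrange := mul_rangeProjection hgc
    obtain ⟨v, hv, hvh, hgv⟩ := C.exists_partialIsometry_of_le hh
      (hc.isStarProjection_rangeProjection.sub_of_mul_eq_right hg hrange) (by
        rw [hc.map_sub_rangeProjection hN hg hgc]
        simp only [Finset.sum_const, Finset.card_univ, Fintype.card_fin, nsmul_eq_mul]
        linarith)
    have hcv : IsFrame (fun _ => h) (Sum.elim c fun _ : Fin 1 => v) :=
      .sumElim hc ⟨fun _ => hv, fun _ => hvh, fun _ _ hne => (hne (Subsingleton.elim _ _)).elim⟩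
        fun i _ => hc.star_mul_eq_zero_of_sub_rangeProjection_mul hg hgc hgv i
    refine ⟨_, hcv.comp finSumFinEquiv.symm.injective, fun i => ?_⟩
    obtain ⟨j | j, rfl⟩ := finSumFinEquiv.surjective i
    · simpa using hgc j
    · simpa using mul_eq_of_sub_mul_eq hg.isIdempotentElem hrange hgv

theorem exists_frame_near (C : IsDiffuseStarFactor Q N) (hh : IsStarProjection h)
    (hpos : 0 < N h) (hg : IsStarProjection g) :
    ∃ (n : ℕ) (c : Fin n → Q), IsFrame (fun _ => h) c ∧ (∀ i, g * c i = c i) ∧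
      N (g - rangeProjection c) ≤ N h := by
  have hN := C.isPseudoRankFunction
  have hfloor := Nat.floor_le (div_nonneg (hN.nonneg g) hpos.le)
  have hlt := Nat.lt_floor_add_one (N g / N h)
  rw [le_div_iff₀ hpos] at hfloor
  rw [div_lt_iff₀ hpos] at hlt
  obtain ⟨c, hc, hgc⟩ := C.exists_frame hh hg hfloor
  refine ⟨_, c, hc, hgc, ?_⟩
  rw [hc.map_sub_rangeProjection hN hg hgc]
  simp only [Finset.sum_const, Finset.card_univ, Fintype.card_fin, nsmul_eq_mul]
  linarith

theorem exists_frame_extension (C : IsDiffuseStarFactor Q N) {ι : Type*} [Fintype ι]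
    (hh : IsStarProjection h) (hg : IsStarProjection g) {c : ι → Q} (hc : IsFrame (fun _ => h) c)
    (hgc : ∀ i, g * c i = c i) {n : ℕ} (hn : (Fintype.card ι + n) * N h ≤ N g) :
    ∃ d : Fin n → Q, IsFrame (fun _ => h) (Sum.elim c d) ∧ ∀ i, g * d i = d i := by
  have hrange := mul_rangeProjection hgc
  obtain ⟨d, hd, hgd⟩ := C.exists_frame hh
    (hc.isStarProjection_rangeProjection.sub_of_mul_eq_right hg hrange) (n := n) (by
      rw [hc.map_sub_rangeProjection C.isPseudoRankFunction hg hgc]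
      simp only [Finset.sum_const, Finset.card_univ, nsmul_eq_mul]
      linarith)
  have horth (i j) := hc.star_mul_eq_zero_of_sub_rangeProjection_mul hg hgc (hgd j) i
  exact ⟨d, hc.sumElim hd horth,
    fun j => mul_eq_of_sub_mul_eq hg.isIdempotentElem hrange (hgd j)⟩

end IsDiffuseStarFactor

/-! ### Matrices over a `*`-Pythagorean field -/

theorem StarPythagorean.exists_sum_eq {F : Type*} [Field F] [StarRing F] (hpy : StarPythagorean F)
    {ι : Type*} (s : Finset ι) (x : ι → F) : ∃ z, ∑ i ∈ s, x i * star (x i) = z * star z := by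
  classical
  induction s using Finset.induction_on with
  | empty => exact ⟨0, by simp⟩
  | insert i s hi ih =>
    obtain ⟨z, hz⟩ := ih
    obtain ⟨w, hw⟩ := hpy (x i) z
    exact ⟨w, by rw [Finset.sum_insert hi, hz, hw]⟩

theorem card_le_card_of_mul_eq_one {F m n : Type*} [Field F] [Fintype m] [Fintype n]
    [DecidableEq m] {A : Matrix m n F} {B : Matrix n m F} (h : A * B = 1) :
    Fintype.card m ≤ Fintype.card n := by
  have hrank := Matrix.rank_mul_le_left A B
  rw [h, Matrix.rank_one] at hrank
  exact hrank.trans A.rank_le_card_width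

section PosDefStar

open Matrix

variable {F : Type*} [Field F] [StarRing F] {n : ℕ}

theorem exists_mem_dotProduct_self_eq_one (hF : PosDefStar F) (hpy : StarPythagorean F)
    {S : Submodule F (Fin n → F)} (hS : S ≠ ⊥) : ∃ u ∈ S, star u ⬝ᵥ u = 1 := by
  obtain ⟨v, hvS, hv⟩ := S.exists_mem_ne_zero_of_ne_bot hS
  obtain ⟨z, hz⟩ := hpy.exists_sum_eq Finset.univ v
  have hvv : star v ⬝ᵥ v = z * star z := by rw [← hz, dotProduct_comm]; rfl
  have hz0 : z ≠ 0 := by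
    rintro rfl
    exact hv (funext (hF n v (by rw [zero_mul] at hvv; exact hvv)))
  refine ⟨z⁻¹ • v, S.smul_mem _ hvS, ?_⟩
  have hstar : star z ≠ 0 := star_ne_zero.2 hz0
  rw [star_smul, smul_dotProduct, dotProduct_smul, hvv, star_inv₀, smul_eq_mul, smul_eq_mul]
  field_simp

theorem exists_orthonormal_basis (hF : PosDefStar F) (hpy : StarPythagorean F)
    (S : Submodule F (Fin n → F)) :
    ∃ (r : ℕ) (v : Fin r → Fin n → F), (∀ j, v j ∈ S) ∧
      (∀ i j, star (v i) ⬝ᵥ v j = (1 : Matrix (Fin r) (Fin r) F) i j) ∧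
      ∀ x ∈ S, ∑ j, (star (v j) ⬝ᵥ x) • v j = x := by
  induction S using WellFoundedLT.induction with
  | ind S ih =>
  by_cases hS : S = ⊥
  · exact ⟨0, Fin.elim0, Fin.rec0, Fin.rec0, fun x hx => by simp [(S.eq_bot_iff.1 hS) x hx]⟩
  obtain ⟨u, huS, huu⟩ := exists_mem_dotProduct_self_eq_one hF hpy hS
  obtain ⟨r, v, hvS, hv, hspan⟩ := ih (S ⊓ LinearMap.ker (dotProductBilin F F (star u)))
    (inf_le_left.lt_of_ne fun h => by simpa [huu] using (h.ge huS).2)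
  have huv (j) : star u ⬝ᵥ v j = 0 := (hvS j).2
  have hvu (j) : star (v j) ⬝ᵥ u = 0 := by
    rw [← star_star (star (v j) ⬝ᵥ u), ← star_dotProduct_star, star_star, huv, star_zero]
  refine ⟨r + 1, Fin.cons u v, Fin.cases huS fun j => (hvS j).1, ?_, fun x hx => ?_⟩
  · refine Fin.cases (Fin.cases (by simpa using huu) fun j => ?_)
      fun i => Fin.cases ?_ fun j => ?_
    · simpa [(Fin.succ_ne_zero j).symm] using huv j
    · simpa using hvu i
    · simpa [one_apply] using hv i j
  · have hmem : x - (star u ⬝ᵥ x) • u ∈ S ⊓ LinearMap.ker (dotProductBilin F F (star u)) :=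
      ⟨S.sub_mem hx (S.smul_mem _ huS), by simp [huu]⟩
    have hproj := hspan _ hmem
    simp only [dotProduct_sub, dotProduct_smul, hvu, smul_zero, sub_zero] at hproj
    simp [Fin.sum_univ_succ, hproj]

theorem exists_isometry_onto_range (hF : PosDefStar F) (hpy : StarPythagorean F)
    (a : Matrix (Fin n) (Fin n) F) :
    ∃ (r : ℕ) (W : Matrix (Fin n) (Fin r) F), Wᴴ * W = 1 ∧ W * Wᴴ * a = a ∧
      ∃ Y : Matrix (Fin n) (Fin r) F, W = a * Y := by
  obtain ⟨r, v, hva, hv, hspan⟩ := exists_orthonormal_basis hF hpy (LinearMap.range a.mulVecLin)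
  choose y hy using hva
  refine ⟨r, (Matrix.of v)ᵀ, Matrix.ext hv, ?_, (Matrix.of y)ᵀ, ?_⟩
  · ext i j
    have hcol := congrFun (hspan (a.col j) ⟨Pi.single j 1, by simp⟩) i
    rw [Matrix.mul_assoc]
    simpa [mul_apply, dotProduct, mul_comm] using hcol
  · ext i j
    exact (congrFun (hy j) i).symm

theorem exists_partialIsometry_matrix (hF : PosDefStar F) (hpy : StarPythagorean F)
    (a : Matrix (Fin n) (Fin n) F) :
    ∃ w : Matrix (Fin n) (Fin n) F, IsPartialIsometry w ∧ w * star w * a = a ∧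
      (∃ y, w = a * y) ∧ ∃ y, w = y * a := by
  obtain ⟨r, W, hW, hWa, Y, hY⟩ := exists_isometry_onto_range hF hpy a
  obtain ⟨s, V, hV, hVa, Z, hZ⟩ := exists_isometry_onto_range hF hpy aᴴ
  have haV : a * (V * Vᴴ) = a := by simpa [Matrix.mul_assoc] using congrArg conjTranspose hVa
  have haW : aᴴ * (W * Wᴴ) = aᴴ := by simpa [Matrix.mul_assoc] using congrArg conjTranspose hWa
  have hrs : Wᴴ * a * V * (Vᴴ * Y) = 1 := by
    calc _ = Wᴴ * (a * (V * Vᴴ) * Y) := by simp only [Matrix.mul_assoc]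
      _ = 1 := by rw [haV, ← hY, hW]
  have hsr : Vᴴ * aᴴ * W * (Wᴴ * Z) = 1 := by
    calc _ = Vᴴ * (aᴴ * (W * Wᴴ) * Z) := by simp only [Matrix.mul_assoc]
      _ = 1 := by rw [haW, ← hZ, hV]
  obtain rfl : r = s := by
    simpa using (card_le_card_of_mul_eq_one hrs).antisymm (card_le_card_of_mul_eq_one hsr)
  have hfinal : W * Vᴴ * star (W * Vᴴ) = W * Wᴴ := by
    rw [star_eq_conjTranspose, conjTranspose_mul, conjTranspose_conjTranspose, Matrix.mul_assoc,
      ← Matrix.mul_assoc Vᴴ, hV, Matrix.one_mul]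
  refine ⟨W * Vᴴ, ?_, by rw [hfinal, hWa], ⟨Y * Vᴴ, by rw [← Matrix.mul_assoc, ← hY]⟩,
    W * Zᴴ, ?_⟩
  · rw [IsPartialIsometry, hfinal, Matrix.mul_assoc, ← Matrix.mul_assoc Wᴴ, hW, Matrix.one_mul]
  · rw [hZ, conjTranspose_mul, conjTranspose_conjTranspose, Matrix.mul_assoc]

end PosDefStar

/-- A finite product of full matrix algebras over `F`. -/
abbrev MatrixProduct (F : Type*) {ι : Type*} (n : ι → ℕ) : Type _ :=
  ∀ i, Matrix (Fin (n i)) (Fin (n i)) F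

theorem exists_partialIsometry_matrixProduct {F : Type*} [Field F] [StarRing F]
    (hF : PosDefStar F) (hpy : StarPythagorean F) {ι : Type*} {n : ι → ℕ} (a : MatrixProduct F n) :
    ∃ w : MatrixProduct F n, IsPartialIsometry w ∧ w * star w * a = a ∧
      (∃ y, w = a * y) ∧ ∃ y, w = y * a := by
  choose w hw hwa hright hleft using fun i => exists_partialIsometry_matrix hF hpy (a i)
  choose y hy using hright
  choose z hz using hleft
  exact ⟨w, funext hw, funext hwa, ⟨y, funext hy⟩, z, funext hz⟩

/-! ### Local approximation by matrix algebras -/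

/-- Finitely many elements of `Q` can be simultaneously approximated in rank from the image of a
*-homomorphism from a finite product of matrix algebras. -/
def IsLocallyMatricial (F : Type*) [Field F] [StarRing F] {Q : Type*} [Ring Q] [Algebra F Q]
    [StarRing Q] (N : Q → ℝ) : Prop :=
  ∀ ε : ℝ, 0 < ε → ∀ s : Finset Q, ∃ (k : ℕ) (n : Fin (k + 1) → ℕ), (∀ i, 0 < n i) ∧
    ∃ Θ : MatrixProduct F n →⋆ₐ[F] Q, ∀ x ∈ s, ∃ y, N (x - Θ y) < ε

theorem exists_mul_mul_ne_zero {R : Type*} [Ring R] [IsSimpleRing R] {a b : R} (ha : a ≠ 0)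
    (hb : b ≠ 0) : ∃ z, a * z * b ≠ 0 := by
  by_contra! hcon
  let I : TwoSidedIdeal R := .mk' {x | ∀ z, a * z * x = 0} (by simp)
    (fun hx hy z => by rw [mul_add, hx, hy, add_zero]) (fun hx z => by rw [mul_neg, hx, neg_zero])
    (fun {x _} hy z => by rw [← mul_assoc, mul_assoc a, hy])
    (fun hx z => by rw [← mul_assoc, hx, zero_mul])
  have hI (x : R) : x ∈ I ↔ ∀ z, a * z * x = 0 := TwoSidedIdeal.mem_mk' ..
  rcases eq_bot_or_eq_top I with h | h
  · exact hb ((TwoSidedIdeal.mem_bot R).1 (h ▸ (hI b).2 hcon))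
  · exact ha (by simpa using (hI 1).1 (h ▸ trivial) 1)

namespace IsRankedStarRegular

variable {Q : Type*} [Ring Q] [StarRing Q] {N : Q → ℝ} {e f p w : Q}

theorem exists_partialIsometry_of_rank_lt (C : IsRankedStarRegular Q N) (hf : IsStarProjection f)
    (hw : IsPartialIsometry w) (hlt : N ((1 - e) * w) + N (w * (1 - f)) < N w) :
    ∃ v, v ≠ 0 ∧ IsPartialIsometry v ∧ e * v = v ∧ v * f = v := by
  have hN := C.isPseudoRankFunction
  obtain ⟨g₁, hg₁, hwg₁, hfg₁, hrank₁⟩ :=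
    C.exists_subprojection_annihilated hw.isStarProjection_initial (1 - f)
  obtain ⟨g, hg, hg₁g, heg, hrank⟩ := C.exists_subprojection_annihilated hg₁ ((1 - e) * w)
  have hpos : 0 < N g := by
    have hf_le : N ((1 - f) * (star w * w)) ≤ N (w * (1 - f)) := by
      rw [← mul_assoc, ← C.map_star (w * (1 - f)), star_mul, hf.one_sub.isSelfAdjoint.star_eq]
      exact hN.mul_le_left _ _
    have he_le := hN.mul_le_left ((1 - e) * w) g₁
    rw [hN.map_sub_projection hw.isStarProjection_initial hg₁ hwg₁, hw.map_initial hN] at hrank₁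
    rw [hN.map_sub_projection hg₁ hg hg₁g] at hrank
    linarith
  have hwg : star w * w * g = g := by rw [← hg₁g, ← mul_assoc, hwg₁]
  have hinitial : star (w * g) * (w * g) = g := by
    rw [star_mul, hg.isSelfAdjoint.star_eq, mul_assoc, ← mul_assoc (star w), hwg,
      hg.isIdempotentElem.eq]
  refine ⟨w * g, ?_, .of_initial C.proper (hinitial.symm ▸ hg), ?_, ?_⟩
  · intro hzero
    rw [← hinitial, hzero, mul_zero, hN.map_zero] at hpos
    exact hpos.false
  · rw [mul_assoc, sub_mul, one_mul, sub_eq_zero] at heg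
    exact heg.symm
  · rw [sub_mul, one_mul, sub_eq_zero] at hfg₁
    rw [mul_assoc, (mul_eq_right_iff_mul_eq_left hf hg).1 (by rw [← hg₁g, ← mul_assoc, ← hfg₁])]

theorem exists_proper_subprojection [IsSimpleRing Q] (C : IsRankedStarRegular Q N)
    (hrange : Set.range N = Set.Icc 0 1) (hp : IsStarProjection p) (hp0 : p ≠ 0) :
    ∃ q, IsStarProjection q ∧ p * q = q ∧ q ≠ 0 ∧ q ≠ p := by
  have hN := C.isPseudoRankFunction
  have hpos := C.isRankFunction.pos hp0
  obtain ⟨x, hx⟩ : N p / 2 ∈ Set.range N := by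
    rw [hrange]
    constructor <;> linarith [hN.le_one p]
  have hx0 : x ≠ 0 := by
    rintro rfl
    linarith [hN.map_zero]
  obtain ⟨z, hz⟩ := exists_mul_mul_ne_zero hp0 hx0
  obtain ⟨q, hq, hqx, ⟨y, rfl⟩, hrank⟩ := C.exists_left_projection (p * z * x)
  refine ⟨_, hq, ?_, ?_, ?_⟩
  · simp only [← mul_assoc, hp.isIdempotentElem.eq]
  · intro h
    rw [h, zero_mul] at hqx
    exact hz hqx.symm
  · intro h
    rw [h] at hrank
    linarith [hN.mul_le_right (p * z) x]

theorem exists_partialIsometry_of_isLocallyMatricial {F : Type*} [Field F] [StarRing F]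
    [Algebra F Q] [IsSimpleRing Q] (C : IsRankedStarRegular Q N) (hF : PosDefStar F)
    (hpy : StarPythagorean F) (hloc : IsLocallyMatricial F N) (he : IsStarProjection e)
    (hf : IsStarProjection f) (he0 : e ≠ 0) (hf0 : f ≠ 0) :
    ∃ v, v ≠ 0 ∧ IsPartialIsometry v ∧ e * v = v ∧ v * f = v := by
  have hN := C.isPseudoRankFunction
  obtain ⟨z, hz⟩ := exists_mul_mul_ne_zero he0 hf0
  set x := e * z * f
  have hex : e * x = x := by simp only [x, ← mul_assoc, he.isIdempotentElem.eq]
  have hxf : x * f = x := by simp only [x, mul_assoc, hf.isIdempotentElem.eq]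
  have hpos := C.isRankFunction.pos hz
  obtain ⟨k, n, -, Θ, hΘ⟩ := hloc (N x / 4) (by positivity) {x}
  obtain ⟨a, ha⟩ := hΘ x (Finset.mem_singleton_self x)
  obtain ⟨w, hw, hwa, ⟨y, hy⟩, y', hy'⟩ := exists_partialIsometry_matrixProduct hF hpy a
  refine C.exists_partialIsometry_of_rank_lt hf (hw.map Θ) ?_
  have hleft : N ((1 - e) * Θ w) ≤ N (x - Θ a) := by
    have heq : (1 - e) * Θ w = (1 - e) * (Θ a - x) * Θ y := by
      rw [mul_sub _ (Θ a), sub_mul _ _ x, hex, one_mul, sub_self, sub_zero, mul_assoc, ← map_mul,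
        ← hy]
    rw [heq, hN.map_sub_comm]
    exact hN.mul_mul_le _ _ _
  have hright : N (Θ w * (1 - f)) ≤ N (x - Θ a) := by
    have heq : Θ w * (1 - f) = Θ y' * (Θ a - x) * (1 - f) := by
      rw [mul_assoc, sub_mul (Θ a), mul_sub x, hxf, mul_one, sub_self, sub_zero, ← mul_assoc,
        ← map_mul, ← hy']
    rw [heq, hN.map_sub_comm]
    exact hN.mul_mul_le _ _ _
  have hlarge : N x ≤ N (x - Θ a) + N (Θ w) := calc
    N x = N (x - Θ a + Θ a) := by rw [sub_add_cancel]
    _ ≤ N (x - Θ a) + N (Θ a) := hN.subadditive _ _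
    _ ≤ N (x - Θ a) + N (Θ w) := by
      gcongr
      rw [← hwa, mul_assoc, map_mul]
      exact hN.mul_le_left _ _
  linarith

theorem isDiffuseStarFactor {F : Type*} [Field F] [StarRing F] [Algebra F Q] [IsSimpleRing Q]
    (C : IsRankedStarRegular Q N) {N₀ : Q → ℝ} (hN₀ : IsRankFunction N₀)
    (hrange : Set.range N₀ = Set.Icc 0 1) (hF : PosDefStar F) (hpy : StarPythagorean F)
    (hloc : IsLocallyMatricial F N) : IsDiffuseStarFactor Q N where
  __ := C
  exists_partialIsometry _ _ := C.exists_partialIsometry_of_isLocallyMatricial hF hpy hloc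
  exists_proper_subprojection _ :=
    exists_proper_subprojection { C with isRankFunction := hN₀ } hrange

end IsRankedStarRegular

/-! ### Frames adapted to a product of matrix algebras -/

/-- The linear span of the matrix units `c i * star (c j)` of a frame. -/
def frameSpan (F : Type*) {ι Q : Type*} [Field F] [Ring Q] [StarRing Q] [Algebra F Q]
    (c : ι → Q) : Submodule F Q :=
  Submodule.span F (Set.range fun i : ι × ι => c i.1 * star (c i.2))

theorem IsFrame.compress_mem_frameSpan {F ι Q : Type*} [Field F] [Fintype ι] [Ring Q] [StarRing Q]
    [Algebra F Q] {h a : Q} {c : ι → Q} (hc : IsFrame (fun _ => h) c)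
    (ha : ∀ i j, ∃ t : F, star (c i) * a * c j = t • h) :
    rangeProjection c * a * rangeProjection c ∈ frameSpan F c := by
  simp only [rangeProjection, Finset.sum_mul, Finset.mul_sum]
  refine Submodule.sum_mem _ fun j _ => Submodule.sum_mem _ fun i _ => ?_
  obtain ⟨t, ht⟩ := ha i j
  have heq : c i * star (c i) * a * (c j * star (c j)) = t • (c i * star (c j)) := calc
    _ = c i * (star (c i) * a * c j) * star (c j) := by simp only [mul_assoc]
    _ = t • (c i * star (c j)) := by
      rw [ht, mul_smul_comm, hc.mul_initial i, smul_mul_assoc]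
  rw [heq]
  exact Submodule.smul_mem _ _ (Submodule.subset_span ⟨(i, j), rfl⟩)

/-- A frame of minimal partial isometries in a *-algebra; `τ x` is the simple block that contains
`X x`, and the members of the block `t` have initial projection `P t`. -/
structure IsMinimalFrame (F : Type*) {T J A : Type*} [Field F] [Ring A] [StarRing A] [Algebra F A]
    (τ : J → T) (P : T → A) (X : J → A) : Prop extends IsFrame (P ∘ τ) X where
  exists_star_mul_mul_eq_smul : ∀ (a : A) ⦃x y⦄, τ x = τ y →
    ∃ t : F, star (X x) * a * X y = t • P (τ y)
  star_mul_mul_eq_zero : ∀ (a : A) ⦃x y⦄, τ x ≠ τ y → star (X x) * a * X y = 0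

namespace IsMinimalFrame

variable {F T J A Q : Type*} [Field F] [Ring A] [StarRing A] [Algebra F A] [Ring Q] [StarRing Q]
  [Algebra F Q] {τ : J → T} {P : T → A} {X : J → A}

theorem exists_refinement_star_mul_mul_eq_smul (hX : IsMinimalFrame F τ P X) (Θ : A →⋆ₐ[F] Q)
    {h : Q} {κ : T → Type*} {d : ∀ t, κ t → Q} (hd : ∀ t, IsFrame (fun _ => h) (d t))
    (hPd : ∀ t s, Θ (P t) * d t s = d t s) (y : A) (z z' : Σ x, κ (τ x)) :
    ∃ t : F, star (Θ (X z.1) * d (τ z.1) z.2) * Θ y * (Θ (X z'.1) * d (τ z'.1) z'.2) = t • h := by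
  obtain ⟨x, s⟩ := z
  obtain ⟨x', s'⟩ := z'
  have hd' : ∀ {t t'}, t = t' → ∀ s s', ∃ r : F, star (d t s) * d t' s' = r • h := by
    rintro t _ rfl s s'
    by_cases hss : s = s'
    · exact ⟨1, by rw [← hss, (hd t).star_mul_self, one_smul]⟩
    · exact ⟨0, by rw [(hd t).star_mul_of_ne hss, zero_smul]⟩
  have heq : star (Θ (X x) * d (τ x) s) * Θ y * (Θ (X x') * d (τ x') s') =
      star (d (τ x) s) * Θ (star (X x) * y * X x') * d (τ x') s' := by
    simp only [star_mul, map_mul, map_star, mul_assoc]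
  rw [heq]
  by_cases hτ : τ x = τ x'
  · obtain ⟨t, ht⟩ := hX.exists_star_mul_mul_eq_smul y hτ
    obtain ⟨r, hr⟩ := hd' hτ s s'
    refine ⟨t * r, ?_⟩
    rw [ht, map_smul, mul_smul_comm, smul_mul_assoc, mul_assoc, hPd, hr, mul_smul]
  · exact ⟨0, by rw [hX.star_mul_mul_eq_zero y hτ, map_zero, mul_zero, zero_mul, zero_smul]⟩

theorem exists_frame_compress_mem [Fintype J] (hX : IsMinimalFrame F τ P X) {N : Q → ℝ}
    (C : IsDiffuseStarFactor Q N) (Θ : A →⋆ₐ[F] Q) (hP : ∀ t, IsStarProjection (P t)) {h : Q}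
    (hh : IsStarProjection h) (hpos : 0 < N h) :
    ∃ (m : T → ℕ) (c : (Σ x, Fin (m (τ x))) → Q), IsFrame (fun _ => h) c ∧
      (∀ i, Θ (rangeProjection X) * c i = c i) ∧
      N (Θ (rangeProjection X) - rangeProjection c) ≤ Fintype.card J * N h ∧
      ∀ y, rangeProjection c * Θ y * rangeProjection c ∈ frameSpan F c := by
  have hN := C.isPseudoRankFunction
  have hΘX := hX.map Θ
  have hrange : Θ (rangeProjection X) = rangeProjection (Θ ∘ X) := by
    simp [rangeProjection, map_star]
  choose m d hd hPd hrank using fun t => C.exists_frame_near hh hpos ((hP t).map Θ)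
  have hc := hΘX.sigma (fun x => hd (τ x)) fun x => hPd (τ x)
  refine ⟨m, _, hc, fun i => ?_, ?_, fun y => hc.compress_mem_frameSpan
    (hX.exists_refinement_star_mul_mul_eq_smul Θ hd hPd y)⟩
  · rw [hrange, ← mul_assoc, hΘX.rangeProjection_mul]
  · have hterm (x : J) : (Θ ∘ X) x * star ((Θ ∘ X) x) -
        (Θ ∘ X) x * rangeProjection (d (τ x)) * star ((Θ ∘ X) x) =
          (Θ ∘ X) x * (Θ (P (τ x)) - rangeProjection (d (τ x))) * star ((Θ ∘ X) x) := by
      rw [mul_sub, sub_mul,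
        show (Θ ∘ X) x * Θ (P (τ x)) = (Θ ∘ X) x from hΘX.mul_initial x]
    rw [hrange, rangeProjection_sigma (Θ ∘ X) fun x => d (τ x), rangeProjection,
      ← Finset.sum_sub_distrib, Finset.sum_congr rfl fun x _ => hterm x]
    calc _ ≤ ∑ _x : J, N h := (hN.sum_le _ _).trans
          (Finset.sum_le_sum fun x _ => (hN.mul_mul_le _ _ _).trans (hrank (τ x)))
      _ = Fintype.card J * N h := by simp

theorem pi {ι : Type*} [DecidableEq ι] {A : ι → Type*} [∀ i, Ring (A i)] [∀ i, StarRing (A i)]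
    [∀ i, Algebra F (A i)] {J : ι → Type*} {P : ∀ i, A i} {X : ∀ i, J i → A i}
    (hX : ∀ i, IsMinimalFrame F (fun _ : J i => ()) (fun _ => P i) (X i)) :
    IsMinimalFrame F (fun x : Σ i, J i => x.1) (fun i => Pi.single i (P i))
      fun x => Pi.single x.1 (X x.1 x.2) := by
  have hcompress (a : ∀ i, A i) (i b b') : star (Pi.single i (X i b)) * a * Pi.single i (X i b') =
      Pi.single i (star (X i b) * a i * X i b') := by
    rw [← Pi.single_star, ← Pi.single_mul_left, ← Pi.single_mul]
  have hzero (a : ∀ i, A i) {i j} (hij : i ≠ j) (b b') :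
      star (Pi.single i (X i b)) * a * Pi.single j (X j b') = 0 := by
    rw [← Pi.single_star, ← Pi.single_mul_left, ← Pi.single_mul_left, Pi.single_eq_of_ne hij,
      mul_zero, Pi.single_zero]
  refine ⟨⟨fun ⟨i, b⟩ => ?_, fun ⟨i, b⟩ => ?_, ?_⟩, ?_, ?_⟩
  · rw [IsPartialIsometry, ← Pi.single_star, ← Pi.single_mul, ← Pi.single_mul,
      (hX i).isPartialIsometry b]
  · simpa [(hX i).star_mul_self b] using hcompress 1 i b b
  · rintro ⟨i, b⟩ ⟨j, b'⟩ hne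
    by_cases hij : i = j
    · subst hij
      have hbb' : b ≠ b' := fun h => hne (h ▸ rfl)
      simpa [(hX i).star_mul_of_ne hbb'] using hcompress 1 i b b'
    · simpa using hzero 1 hij b b'
  · rintro a ⟨i, b⟩ ⟨j, b'⟩ (rfl : i = j)
    obtain ⟨t, ht⟩ := (hX i).exists_star_mul_mul_eq_smul (a i) (x := b) (y := b') rfl
    exact ⟨t, by rw [hcompress, ht, Pi.single_smul]⟩
  · rintro a ⟨i, b⟩ ⟨j, b'⟩ hij
    exact hzero a hij b b'

open Matrix in
theorem matrix {m n : Type*} [StarRing F] [Fintype m] [Fintype n] [DecidableEq m] [DecidableEq n]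
    {W : Matrix m n F} (hW : Wᴴ * W = 1) (o : m) :
    IsMinimalFrame F (fun _ : n => ()) (fun _ => Matrix.single o o (1 : F))
      fun b => (W * Matrix.single b o (1 : F) : Matrix m m F) := by
  have hcompress (a : Matrix m m F) (b b') : star (W * Matrix.single b o (1 : F)) * a *
      (W * Matrix.single b' o (1 : F)) = (Wᴴ * a * W) b b' • Matrix.single o o (1 : F) := calc
    _ = Matrix.single o b (1 : F) * (Wᴴ * a * W) * Matrix.single b' o (1 : F) := by
      simp [star_eq_conjTranspose, Matrix.mul_assoc]
    _ = _ := by simp [smul_single]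
  have hself (b b') : star (W * Matrix.single b o (1 : F)) * (W * Matrix.single b' o (1 : F)) =
      (1 : Matrix n n F) b b' • Matrix.single o o (1 : F) := by
    simpa [hW] using hcompress 1 b b'
  refine ⟨⟨fun b => ?_, fun b => ?_, fun b b' hne => ?_⟩, fun a b b' _ => ⟨_, hcompress a b b'⟩,
    fun a b b' hne => (hne rfl).elim⟩
  · rw [IsPartialIsometry, mul_assoc, hself, one_apply_eq, one_smul, Matrix.mul_assoc,
      single_mul_single_same, one_mul]
  · rw [hself, one_apply_eq, one_smul]; rfl
  · rw [hself, one_apply_ne hne, zero_smul]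

end IsMinimalFrame

open Matrix in
theorem rangeProjection_mul_single {F m n : Type*} [Field F] [StarRing F] [Fintype m] [Fintype n]
    [DecidableEq m] [DecidableEq n] (W : Matrix m n F) (o : m) :
    rangeProjection (fun b : n => (W * Matrix.single b o (1 : F) : Matrix m m F)) = W * Wᴴ := calc
  _ = ∑ b : n, (W * Matrix.single b b (1 : F) * Wᴴ : Matrix m m F) := by
    refine Finset.sum_congr rfl fun b _ => ?_
    beta_reduce
    rw [star_eq_conjTranspose, conjTranspose_mul, conjTranspose_single, star_one, Matrix.mul_assoc,
      ← Matrix.mul_assoc (single b o 1), single_mul_single_same, one_mul, Matrix.mul_assoc]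
  _ = (W * (∑ b : n, Matrix.single b b (1 : F)) * Wᴴ : Matrix m m F) := by
    rw [Matrix.mul_sum, Matrix.sum_mul]
  _ = W * Wᴴ := by rw [Matrix.sum_single_one, Matrix.mul_one]

theorem rangeProjection_piSingle {ι : Type*} [Fintype ι] [DecidableEq ι] {A : ι → Type*}
    [∀ i, Ring (A i)] [∀ i, StarRing (A i)] {J : ι → Type*} [∀ i, Fintype (J i)]
    (X : ∀ i, J i → A i) :
    rangeProjection (fun x : Σ i, J i => (Pi.single x.1 (X x.1 x.2) : ∀ i, A i)) =
      fun i => rangeProjection (X i) := by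
  have hterm (i : ι) (b : J i) : (Pi.single i (X i b) : ∀ i, A i) * star (Pi.single i (X i b)) =
      Pi.single i (X i b * star (X i b)) := by
    rw [← Pi.single_star, ← Pi.single_mul]
  rw [rangeProjection, Fintype.sum_sigma]
  have hsum (i : ι) : ∑ b, (Pi.single i (X i b * star (X i b)) : ∀ i, A i) =
      Pi.single i (rangeProjection (X i)) :=
    (map_sum (AddMonoidHom.single A i) _ _).symm
  simp only [hterm, hsum]
  exact Finset.univ_sum_single fun i => rangeProjection (X i)

open Matrix in
theorem IsDiffuseStarFactor.exists_frame_of_matrixProduct {F Q : Type*} [Field F] [StarRing F]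
    [Ring Q] [StarRing Q] [Algebra F Q] {N : Q → ℝ} (C : IsDiffuseStarFactor Q N)
    (hF : PosDefStar F) (hpy : StarPythagorean F) {k : ℕ} {n : Fin k → ℕ} (hn : ∀ i, 0 < n i)
    (Θ : MatrixProduct F n →⋆ₐ[F] Q) (a : MatrixProduct F n) :
    ∃ p, IsStarProjection p ∧ p * Θ a = Θ a ∧ (∃ y, p = Θ a * y) ∧ ∃ M : ℕ,
      ∀ h, IsStarProjection h → 0 < N h → ∃ (ι : Type) (_ : Fintype ι) (c : ι → Q),
        IsFrame (fun _ => h) c ∧ (∀ i, p * c i = c i) ∧ N (p - rangeProjection c) ≤ M * N h ∧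
        ∀ y, rangeProjection c * Θ y * rangeProjection c ∈ frameSpan F c := by
  choose r W hWW hWa Y hY using fun i => exists_isometry_onto_range hF hpy (a i)
  have hX := IsMinimalFrame.pi fun i => IsMinimalFrame.matrix (hWW i) ⟨0, hn i⟩
  have hcorner (i : Fin k) : IsStarProjection
      (Pi.single i (Matrix.single ⟨0, hn i⟩ ⟨0, hn i⟩ (1 : F)) : MatrixProduct F n) :=
    ⟨by rw [IsIdempotentElem, ← Pi.single_mul, single_mul_single_same, one_mul],
      by rw [IsSelfAdjoint, ← Pi.single_star, star_eq_conjTranspose, conjTranspose_single,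
        star_one]⟩
  have hrange := rangeProjection_piSingle fun i (b : Fin (r i)) =>
    (W i * Matrix.single b ⟨0, hn i⟩ (1 : F) : Matrix (Fin (n i)) (Fin (n i)) F)
  simp only [rangeProjection_mul_single] at hrange
  refine ⟨Θ fun i => W i * (W i)ᴴ, ?_, ?_, ⟨Θ fun i => Y i * (W i)ᴴ, ?_⟩,
    Fintype.card (Σ i, Fin (r i)), fun h hh hpos => ?_⟩
  · rw [← hrange]
    exact hX.isStarProjection_rangeProjection.map Θ
  · rw [← map_mul]
    exact congrArg Θ (funext hWa)
  · rw [← map_mul]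
    exact congrArg Θ (funext fun i => by
      rw [Pi.mul_apply, ← Matrix.mul_assoc, ← hY])
  · obtain ⟨m, c, hc⟩ := hX.exists_frame_compress_mem C Θ hcorner hh hpos
    rw [hrange] at hc
    exact ⟨_, _, c, hc⟩

/-! ### Approximation by full matrix algebras of size a power of two -/

theorem IsPseudoRankFunction.map_one_sub_mul_le {Q : Type*} [Ring Q] {N : Q → ℝ}
    (hN : IsPseudoRankFunction N) {e : Q} (he : IsIdempotentElem e) (a u : Q) :
    N ((1 - e) * (a * u)) ≤ N (e - a) := by
  have heq : (1 - e) * (a * u) = (1 - e) * (a - e) * u := by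
    rw [mul_sub (1 - e) a e, he.one_sub_mul_self, sub_zero, mul_assoc]
  rw [heq, hN.map_sub_comm e a]
  exact hN.mul_mul_le _ _ _

theorem IsRankedStarRegular.map_sub_conj_le {Q : Type*} [Ring Q] [StarRing Q] {N : Q → ℝ}
    (C : IsRankedStarRegular Q N) {e y : Q} (he : IsStarProjection e) (hy : e * y * e = y)
    (w z : Q) : N (y - w * z * star w) ≤ 2 * N (e - w) + N (y - z) := by
  have hN := C.isPseudoRankFunction
  have heq : y - w * z * star w =
      (e - w) * (y * e) + w * (y - z) * e + w * z * star (e - w) := by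
    rw [star_sub, he.isSelfAdjoint.star_eq]
    nth_rewrite 1 [← hy]
    noncomm_ring
  rw [heq]
  linarith [hN.subadditive ((e - w) * (y * e) + w * (y - z) * e) (w * z * star (e - w)),
    hN.subadditive ((e - w) * (y * e)) (w * (y - z) * e), hN.mul_le_left (e - w) (y * e),
    hN.mul_mul_le w (y - z) e, hN.mul_le_right (w * z) (star (e - w)), C.map_star (e - w)]

theorem mul_mul_mem_of_mem_frameSpan {F ι Q : Type*} [Field F] [Ring Q] [StarRing Q] [Algebra F Q]
    {c : ι → Q} {a b x : Q} {S : Submodule F Q} (hx : x ∈ frameSpan F c)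
    (hS : ∀ i j, a * (c i * star (c j)) * b ∈ S) : a * x * b ∈ S := by
  have hle : frameSpan F c ≤ S.comap (LinearMap.mulLeftRight F (a, b)) :=
    Submodule.span_le.2 (Set.range_subset_iff.2 fun i => by simpa using hS i.1 i.2)
  simpa using hle hx

theorem IsFrame.rangeProjection_restrict_mul_of_notMem {ι Q : Type*} [Ring Q] [StarRing Q]
    {P X : ι → Q} (hX : IsFrame P X) {s : Finset ι} {i : ι} (hi : i ∉ s) :
    rangeProjection (fun j : s => X j) * X i = 0 := by
  rw [rangeProjection, Finset.sum_mul]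
  refine Finset.sum_eq_zero fun j _ => ?_
  rw [mul_assoc, hX.star_mul_of_ne (ne_of_mem_of_not_mem j.2 hi), mul_zero]

theorem IsFrame.conj_mem_frameSpan {F ι κ Q : Type*} [Field F] [Fintype ι] [Ring Q] [StarRing Q]
    [Algebra F Q] {P c : ι → Q} (hc : IsFrame P c) {s : Finset ι} {w : Q}
    (hw : w * rangeProjection (fun i : s => c i) = w) {c' : κ → Q}
    (hc' : ∀ i ∈ s, w * c i ∈ Set.range c') {z : Q}
    (hz : rangeProjection c * z * rangeProjection c ∈ frameSpan F c) :
    w * z * star w ∈ frameSpan F c' := by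
  have hwc (i) (hi : i ∉ s) : w * c i = 0 := by
    rw [← hw, mul_assoc, hc.rangeProjection_restrict_mul_of_notMem hi, mul_zero]
  have hstar : rangeProjection c * star w = star w := by
    have hsub := mul_rangeProjection fun i : s => hc.rangeProjection_mul i
    rw [← hw, star_mul, star_rangeProjection, ← mul_assoc, hsub]
  have hwrange : w * rangeProjection c = w :=
    (mul_eq_left_iff_mul_star_eq_right hc.isStarProjection_rangeProjection).2 hstar
  have heq : w * z * star w =
      w * (rangeProjection c * z * rangeProjection c) * star w := by
    rw [← mul_assoc, ← mul_assoc, hwrange, mul_assoc (w * z), hstar]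
  rw [heq]
  refine mul_mul_mem_of_mem_frameSpan hz fun i j => ?_
  have hconj : w * (c i * star (c j)) * star w = w * c i * star (w * c j) := by
    simp only [star_mul, mul_assoc]
  rw [hconj]
  by_cases hi : i ∈ s
  · by_cases hj : j ∈ s
    · obtain ⟨k, hk⟩ := hc' i hi
      obtain ⟨l, hl⟩ := hc' j hj
      rw [← hk, ← hl]
      exact Submodule.subset_span ⟨(k, l), rfl⟩
    · simp [hwc j hj]
  · simp [hwc i hi]

namespace IsDiffuseStarFactor

variable {F Q : Type*} [Field F] [Ring Q] [StarRing Q] [Algebra F Q] {N : Q → ℝ} {e h p : Q}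

theorem exists_partialIsometry_near (C : IsDiffuseStarFactor Q N) (hp : IsStarProjection p)
    (he : IsStarProjection e) (hle : N p ≤ N e) :
    ∃ w, IsPartialIsometry w ∧ star w * w = p ∧ e * w = w ∧
      N (e - w) ≤ N e - N p + 2 * N ((1 - e) * p) := by
  have hN := C.isPseudoRankFunction
  obtain ⟨q, hq, hpq, heq, hrank⟩ := C.exists_subprojection_annihilated hp (1 - e)
  replace heq : e * q = q := by rw [sub_mul, one_mul, sub_eq_zero] at heq; exact heq.symm
  have hNp := hN.map_sub_projection hp hq hpq
  have hNe := hN.map_sub_projection he hq heq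
  obtain ⟨v, hv, hvp, hve⟩ := C.exists_partialIsometry_of_le (hq.sub_of_mul_eq_right hp hpq)
    (hq.sub_of_mul_eq_right he heq) (by linarith)
  have hqv : star q * v = 0 := by
    rw [hq.isSelfAdjoint.star_eq, ← hve, ← mul_assoc, mul_sub,
      (mul_eq_right_iff_mul_eq_left he hq).1 heq, hq.isIdempotentElem.eq, sub_self, zero_mul]
  have hinitial : star (q + v) * (q + v) = p := by
    rw [IsPartialIsometry.star_add_mul_add hqv, hvp, hq.isSelfAdjoint.star_eq,
      hq.isIdempotentElem.eq, add_sub_cancel]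
  refine ⟨q + v, .of_initial C.proper (hinitial ▸ hp), hinitial, ?_, ?_⟩
  · rw [mul_add, heq, mul_eq_of_sub_mul_eq he.isIdempotentElem heq hve]
  · have hNv : N v = N (p - q) := by rw [← hvp, hv.map_initial hN]
    rw [← sub_sub]
    linarith [hN.sub_le (e - q) v]

theorem exists_full_frame_extension (C : IsDiffuseStarFactor Q N) {ι : Type*} [Fintype ι]
    (hh : IsStarProjection h) (he : IsStarProjection e) {c : ι → Q} (hc : IsFrame (fun _ => h) c)
    (hec : ∀ i, e * c i = c i) {n : ℕ} (hn : Fintype.card ι ≤ n) (hNe : N e = n * N h) :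
    ∃ c' : Fin n → Q, IsFrame (fun _ => h) c' ∧ rangeProjection c' = e ∧
      ∀ i, c i ∈ Set.range c' := by
  obtain ⟨m, rfl⟩ := Nat.exists_eq_add_of_le hn
  obtain ⟨d, hcd, hed⟩ := C.exists_frame_extension hh he hc hec (n := m) (by
    rw [hNe]; push_cast; rfl)
  have σ : Fin (Fintype.card ι + m) ≃ ι ⊕ Fin m := Fintype.equivOfCardEq (by simp)
  have hc' : IsFrame (fun _ => h) (Sum.elim c d ∘ σ) := hcd.comp σ.injective
  have hec' (i) : e * (Sum.elim c d ∘ σ) i = (Sum.elim c d ∘ σ) i := by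
    rcases hi : σ i with j | j <;> simp [hi, hec, hed]
  refine ⟨_, hc', (sub_eq_zero.1 (C.isRankFunction.2 _ ?_)).symm, fun i => ⟨σ.symm (.inl i), ?_⟩⟩
  · rw [hc'.map_sub_rangeProjection C.isPseudoRankFunction he hec', hNe]
    simp
  · simp

theorem exists_frame_shift (C : IsDiffuseStarFactor Q N) {ι : Type*} [Fintype ι]
    (hh : IsStarProjection h) (he : IsStarProjection e) {c : ι → Q} (hc : IsFrame (fun _ => h) c)
    {n : ℕ} (hNe : N e = n * N h) :
    ∃ (c' : Fin n → Q) (w : Q), IsFrame (fun _ => h) c' ∧ rangeProjection c' = e ∧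
      N (e - w) ≤
        max (N e - N (rangeProjection c)) 0 + 2 * N ((1 - e) * rangeProjection c) ∧
      ∀ z, rangeProjection c * z * rangeProjection c ∈ frameSpan F c →
        w * z * star w ∈ frameSpan F c' := by
  have hN := C.isPseudoRankFunction
  obtain ⟨s, -, hs⟩ := Finset.exists_subset_card_eq
    (s := (Finset.univ : Finset ι)) (n := min (Fintype.card ι) n) (min_le_left _ _)
  have hcs : IsFrame (fun _ => h) fun i : s => c i := hc.comp Subtype.val_injective
  have hNc := hc.map_rangeProjection hN
  have hNs := hcs.map_rangeProjection hN
  simp only [Finset.sum_const, Finset.card_univ, nsmul_eq_mul, Fintype.card_coe, hs] at hNc hNs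
  have hle : N (rangeProjection fun i : s => c i) ≤ N e := by
    rw [hNs, hNe]
    gcongr
    · exact hN.nonneg h
    · exact min_le_right _ _
  obtain ⟨w, hw, hws, hew, hrank⟩ := C.exists_partialIsometry_near
    hcs.isStarProjection_rangeProjection he hle
  have hwframe := hcs.mul_left (w := w) fun i => by rw [hws, hcs.rangeProjection_mul]
  obtain ⟨c', hc', hrange, hmem⟩ := C.exists_full_frame_extension hh he hwframe
    (fun i => by rw [← mul_assoc, hew]) (n := n) (by simp [hs]) hNe
  refine ⟨c', w, hc', hrange, hrank.trans (add_le_add ?_ ?_), fun z hz =>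
    hc.conj_mem_frameSpan (by rw [← hws, hw.mul_initial]) (fun i hi => hmem ⟨i, hi⟩) hz⟩
  · rw [hNs, hNc, hNe]
    rcases le_total (Fintype.card ι) n with hcard | hcard
    · rw [min_eq_left hcard]; exact le_max_left _ _
    · rw [min_eq_right hcard, sub_self]; exact le_max_right _ _
  · rw [← mul_rangeProjection fun i : s => hc.rangeProjection_mul i, ← mul_assoc]
    gcongr
    exact hN.mul_le_left _ _

theorem exists_frame_approx (C : IsDiffuseStarFactor Q N) [StarRing F] (hF : PosDefStar F)
    (hpy : StarPythagorean F) (hloc : IsLocallyMatricial F N) (he : IsStarProjection e)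
    (hpos : 0 < N e) {s : Finset Q} (hs : ∀ y ∈ s, e * y * e = y) {ε : ℝ} (hε : 0 < ε) :
    ∃ (m : ℕ) (h : Q) (c : Fin (2 ^ (m + 1)) → Q), IsFrame (fun _ => h) c ∧
      rangeProjection c = e ∧ ∀ y ∈ s, ∃ y' ∈ frameSpan F c, N (y - y') < ε := by
  have hN := C.isPseudoRankFunction
  -- The approximant of `y` is `w * Θ z * star w`: it costs `δ` for `Θ z` and `4 * δ` for each `w`.
  obtain ⟨δ, hδ, rfl⟩ : ∃ δ, 0 < δ ∧ 9 * δ = ε := ⟨ε / 9, by positivity, by ring⟩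
  classical
  obtain ⟨k, n, hn, Θ, happrox⟩ := hloc δ hδ (insert e s)
  obtain ⟨a, ha⟩ := happrox e (Finset.mem_insert_self _ _)
  obtain ⟨p, hp, hpa, ⟨u, hu⟩, M, hM⟩ := C.exists_frame_of_matrixProduct hF hpy hn Θ a
  have hNp : N e ≤ N p + δ := by
    have hle := hN.subadditive (e - Θ a) (Θ a)
    have hNa := hN.mul_le_left p (Θ a)
    rw [sub_add_cancel] at hle
    rw [hpa] at hNa
    linarith
  have hep : N ((1 - e) * p) ≤ δ :=
    hu ▸ (hN.map_one_sub_mul_le he.isIdempotentElem _ _).trans ha.le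
  obtain ⟨m, hm⟩ := pow_unbounded_of_one_lt (M * N e / δ) one_lt_two
  obtain ⟨h, hh, -, hNh⟩ := C.exists_subprojection_div_two_pow he (m + 1)
  have hNe : N e = (2 ^ (m + 1) : ℕ) * N h := by rw [hNh]; push_cast; field_simp
  obtain ⟨ι, _, c, hc, hpc, hNc, hspan⟩ := hM h hh (by rw [hNh]; positivity)
  have hMδ : M * N h ≤ δ := by
    rw [div_lt_iff₀ hδ] at hm
    rw [hNh, ← mul_div_assoc, div_le_iff₀ (by positivity), pow_succ]
    nlinarith [hN.nonneg e, pow_pos (zero_lt_two' ℝ) m]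
  obtain ⟨c', w, hc', hrange, hrank, hmem⟩ := C.exists_frame_shift (F := F) hh he hc hNe
  have hpc' := mul_rangeProjection hpc
  have hw : N (e - w) ≤ 4 * δ := by
    rw [hN.map_sub_projection hp hc.isStarProjection_rangeProjection hpc'] at hNc
    have hmax : max (N e - N (rangeProjection c)) 0 ≤ 2 * δ := max_le (by linarith) (by positivity)
    have hcut : N ((1 - e) * rangeProjection c) ≤ δ := by
      rw [← hpc', ← mul_assoc]
      exact (hN.mul_le_left _ _).trans hep
    linarith
  refine ⟨m, h, c', hc', hrange, fun y hy => ?_⟩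
  obtain ⟨z, hz⟩ := happrox y (Finset.mem_insert_of_mem hy)
  exact ⟨_, hmem (Θ z) (hspan z), by linarith [C.map_sub_conj_le he (hs y hy) w (Θ z)]⟩

end IsDiffuseStarFactor

/-! ### Homomorphisms from full matrix algebras -/

namespace IsFrame

variable {F ι κ Q : Type*} [Field F] [Ring Q] [StarRing Q] [Algebra F Q] {h : Q}

theorem prod {V : ι → Q} {c : κ → Q} {e : Q} (hV : IsFrame (fun _ => e) V)
    (hc : IsFrame (fun _ => h) c) (hec : ∀ s, e * c s = c s) :
    IsFrame (fun _ => h) fun i : ι × κ => V i.1 * c i.2 :=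
  (hV.sigma (fun _ => hc) fun _ => hec).comp (Equiv.sigmaEquivProd ι κ).symm.injective

variable {X : ι → Q}

theorem mul_star_mul_mul_star [DecidableEq ι] (hX : IsFrame (fun _ => h) X) (a b c d : ι) :
    X a * star (X b) * (X c * star (X d)) = if b = c then X a * star (X d) else 0 := by
  have hassoc : X a * star (X b) * (X c * star (X d)) = X a * (star (X b) * X c) * star (X d) := by
    simp only [mul_assoc]
  split_ifs with hbc
  · rw [hassoc, hbc, hX.star_mul_self, hX.mul_initial]
  · rw [hassoc, hX.star_mul_of_ne hbc, mul_zero, zero_mul]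

variable [Fintype ι] [DecidableEq ι] [StarRing F] [StarModule F Q]

/-- The representation of the full matrix algebra on the matrix units `X a * star (X b)` of a frame
whose final projections add up to `1`. -/
def matrixHom (F : Type*) [Field F] [StarRing F] [Algebra F Q] [StarModule F Q]
    (hX : IsFrame (fun _ => h) X) (hone : rangeProjection X = 1) : Matrix ι ι F →⋆ₐ[F] Q where
  toFun M := ∑ a, ∑ b, M a b • (X a * star (X b))
  map_one' := by simp [Matrix.one_apply, ← hone, rangeProjection, ite_smul]
  map_mul' M M' := by
    simp only [Finset.sum_mul, Finset.mul_sum, smul_mul_smul_comm, hX.mul_star_mul_mul_star,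
      smul_ite, smul_zero, Matrix.mul_apply, Finset.sum_smul, Finset.sum_ite_eq',
      Finset.mem_univ, if_true]
    rw [Finset.sum_comm, Finset.sum_comm_cycle]
  map_zero' := by simp
  map_add' M M' := by simp [add_smul, Finset.sum_add_distrib]
  commutes' r := by
    simp [Matrix.algebraMap_matrix_apply, ite_smul, Algebra.algebraMap_eq_smul_one, ← hone,
      rangeProjection, Finset.smul_sum]
  map_star' M := by
    simp only [star_sum, star_smul, star_mul, star_star, Matrix.star_apply]
    exact Finset.sum_comm

theorem matrixHom_apply (hX : IsFrame (fun _ => h) X) (hone : rangeProjection X = 1)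
    (M : Matrix ι ι F) : hX.matrixHom F hone M = ∑ a, ∑ b, M a b • (X a * star (X b)) :=
  rfl

theorem frameSpan_le_range_matrixHom (hX : IsFrame (fun _ => h) X)
    (hone : rangeProjection X = 1) :
    frameSpan F X ≤ LinearMap.range (hX.matrixHom F hone).toAlgHom.toLinearMap := by
  refine Submodule.span_le.2 (Set.range_subset_iff.2 fun i => ⟨Matrix.single i.1 i.2 1, ?_⟩)
  change hX.matrixHom F hone _ = _
  simp [matrixHom_apply, Matrix.single_apply, ite_and, ite_smul]

end IsFrame

/-- The block diagonal embedding `z ↦ diag (z, …, z)` of a full matrix algebra, the rows of the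
block with number `t` being numbered by `E (·, t)`. -/
def amplification (F : Type*) [Field F] [StarRing F] {ι κ ι' : Type*} [Fintype ι] [Fintype κ]
    [Fintype ι'] [DecidableEq ι] [DecidableEq κ] [DecidableEq ι'] (E : ι × κ ≃ ι') :
    Matrix ι ι F →⋆ₐ[F] Matrix ι' ι' F where
  toFun z := Matrix.reindex E E (Matrix.blockDiagonal fun _ : κ => z)
  map_one' := by
    have hone := Matrix.blockDiagonal_one (m := ι) (o := κ) (α := F)
    simp only [Pi.one_def] at hone
    rw [hone, Matrix.reindex_apply, Matrix.submatrix_one_equiv]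
  map_mul' M M' := by
    simp only [Matrix.blockDiagonal_mul, Matrix.reindex_apply, Matrix.submatrix_mul_equiv]
  map_zero' := by
    ext
    simp [Matrix.blockDiagonal_apply]
  map_add' M M' := by
    ext
    simp [Matrix.blockDiagonal_apply, ite_add_zero]
  commutes' r := by
    ext i j
    simp [Matrix.blockDiagonal_apply, Matrix.algebraMap_matrix_apply, ← ite_and, and_comm,
      ← Prod.ext_iff]
  map_star' M := by
    simp only [Matrix.star_eq_conjTranspose, Matrix.conjTranspose_reindex,
      Matrix.blockDiagonal_conjTranspose]

section Amplification

variable {F : Type*} [Field F] [StarRing F] {ι κ ι' : Type*} [Fintype ι] [Fintype κ]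
  [Fintype ι'] [DecidableEq ι] [DecidableEq κ] [DecidableEq ι']

theorem amplification_apply (E : ι × κ ≃ ι') (z : Matrix ι ι F) :
    amplification F E z = Matrix.reindex E E (Matrix.blockDiagonal fun _ : κ => z) :=
  rfl

theorem amplification_eq_id [Unique κ] :
    amplification F (Equiv.prodUnique ι κ) = StarAlgHom.id F (Matrix ι ι F) := by
  ext z i j
  simp [amplification_apply, Matrix.blockDiagonal_apply]

end Amplification

/-- The numbering of the rows of the block diagonal embedding of `M_{2^n}` into `M_{2^{n+1}}`. -/
def doublingEquiv (n : ℕ) : Fin (2 ^ n) × Fin 2 ≃ Fin (2 ^ (n + 1)) :=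
  finProdFinEquiv.trans (finCongr (pow_succ 2 n).symm)

/-- The block diagonal embedding of `M_{2^m}` into `M_{2^n}`, as an iterate of the embeddings of
`M_{2^k}` into `M_{2^{k+1}}`. -/
def dyadicEmbedding (F : Type*) [Field F] [StarRing F] {m n : ℕ} (h : m ≤ n) :
    Matrix (Fin (2 ^ m)) (Fin (2 ^ m)) F →⋆ₐ[F] Matrix (Fin (2 ^ n)) (Fin (2 ^ n)) F :=
  Nat.leRecOn (C := fun k => _ →⋆ₐ[F] Matrix (Fin (2 ^ k)) (Fin (2 ^ k)) F) h
    (fun {k} Φ => (amplification F (doublingEquiv k)).comp Φ) (StarAlgHom.id F _)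

section DyadicEmbedding

variable {F : Type*} [Field F] [StarRing F]

theorem dyadicEmbedding_self (n : ℕ) : dyadicEmbedding F (le_refl n) = StarAlgHom.id F _ :=
  Nat.leRecOn_self _

theorem dyadicEmbedding_succ {m n : ℕ} (h : m ≤ n) (h' : m ≤ n + 1) :
    dyadicEmbedding F h' = (amplification F (doublingEquiv n)).comp (dyadicEmbedding F h) :=
  Nat.leRecOn_succ h _

theorem dyadicEmbedding_comp {l m n : ℕ} (hmn : m ≤ n) (hlm : l ≤ m) :
    (dyadicEmbedding F hmn).comp (dyadicEmbedding F hlm) = dyadicEmbedding F (hlm.trans hmn) := by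
  induction n, hmn using Nat.le_induction with
  | base => rw [dyadicEmbedding_self, StarAlgHom.id_comp]
  | succ n hmn ih =>
    rw [dyadicEmbedding_succ hmn, dyadicEmbedding_succ (hlm.trans hmn), ← ih,
      StarAlgHom.comp_assoc]

theorem dyadicEmbedding_succ_self (n : ℕ) :
    dyadicEmbedding F n.le_succ = amplification F (doublingEquiv n) := by
  rw [dyadicEmbedding_succ le_rfl, dyadicEmbedding_self, StarAlgHom.comp_id]

theorem exists_amplification_eq_dyadicEmbedding (m d : ℕ) :
    ∃ E : Fin (2 ^ m) × Fin (2 ^ d) ≃ Fin (2 ^ (m + d)),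
      amplification F E = dyadicEmbedding F (Nat.le_add_right m d) := by
  induction d with
  | zero =>
    have : Unique (Fin (2 ^ 0)) := inferInstanceAs (Unique (Fin 1))
    exact ⟨Equiv.prodUnique _ _, amplification_eq_id.trans (dyadicEmbedding_self m).symm⟩
  | succ d ih =>
    obtain ⟨E, hE⟩ := ih
    refine ⟨((Equiv.refl _).prodCongr (doublingEquiv d).symm).trans
      ((Equiv.prodAssoc _ _ _).symm.trans ((E.prodCongr (.refl _)).trans
        (doublingEquiv (m + d)))), ?_⟩
    rw [dyadicEmbedding_succ (Nat.le_add_right m d), ← hE]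
    ext z i j
    simp [amplification_apply, Matrix.blockDiagonal_apply, ← ite_and, Prod.ext_iff, and_comm]

end DyadicEmbedding

/-! ### Dyadic towers of matrix algebras -/

theorem isFrame_map_single {F ι Q : Type*} [Field F] [StarRing F] [Fintype ι]
    [DecidableEq ι] [Ring Q] [StarRing Q] [Algebra F Q] (Θ : Matrix ι ι F →⋆ₐ[F] Q) (o : ι) :
    IsFrame (fun _ => Θ (Matrix.single o o 1)) fun a => Θ (Matrix.single a o 1) := by
  have hsingle := (IsMinimalFrame.matrix (F := F) (W := (1 : Matrix ι ι F)) (by simp) o).toIsFrame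
  simpa [Function.comp_def] using hsingle.map Θ

theorem rangeProjection_map_single {F ι Q : Type*} [Field F] [StarRing F] [Fintype ι]
    [DecidableEq ι] [Ring Q] [StarRing Q] [Algebra F Q] (Θ : Matrix ι ι F →⋆ₐ[F] Q) (o : ι) :
    rangeProjection (fun a => Θ (Matrix.single a o 1)) = 1 := by
  have hsingle := congrArg Θ (rangeProjection_mul_single (F := F) (1 : Matrix ι ι F) o)
  simpa [rangeProjection, ← map_star] using hsingle

theorem rangeProjection_comp_equiv {ι κ Q : Type*} [Fintype ι] [Fintype κ] [Ring Q] [StarRing Q]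
    (X : ι → Q) (E : κ ≃ ι) : rangeProjection (X ∘ E) = rangeProjection X :=
  E.sum_comp fun i => X i * star (X i)

theorem frameSpan_comp_equiv {F ι κ Q : Type*} [Field F] [Ring Q] [StarRing Q] [Algebra F Q]
    (X : ι → Q) (E : κ ≃ ι) : frameSpan F (X ∘ E) = frameSpan F X :=
  congrArg (Submodule.span F)
    ((E.prodCongr E).surjective.range_comp fun i : ι × ι => X i.1 * star (X i.2))

theorem rangeProjection_prod {ι κ Q : Type*} [Fintype ι] [Fintype κ] [Ring Q] [StarRing Q]
    {V : ι → Q} {c : κ → Q} (hVc : ∀ a, V a * rangeProjection c = V a) :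
    rangeProjection (fun i : ι × κ => V i.1 * c i.2) = rangeProjection V := by
  have hsum := rangeProjection_sigma V fun _ => c
  simp only [hVc] at hsum
  rw [← rangeProjection_comp_equiv _ (Equiv.sigmaEquivProd ι κ)]
  exact hsum

theorem IsFrame.matrixHom_comp_amplification {F ι κ ι' Q : Type*} [Field F] [StarRing F]
    [Fintype ι] [Fintype κ] [Fintype ι'] [DecidableEq ι] [DecidableEq κ] [DecidableEq ι']
    [Ring Q] [StarRing Q] [Algebra F Q] [StarModule F Q] (Θ : Matrix ι ι F →⋆ₐ[F] Q) (o : ι)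
    {c : κ → Q} (hc : rangeProjection c = Θ (Matrix.single o o 1)) (E : ι × κ ≃ ι') {h : Q}
    (hX : IsFrame (fun _ => h) ((fun i : ι × κ => Θ (Matrix.single i.1 o 1) * c i.2) ∘ E.symm))
    (hone : rangeProjection ((fun i : ι × κ => Θ (Matrix.single i.1 o 1) * c i.2) ∘ E.symm) = 1) :
    (hX.matrixHom F hone).comp (amplification F E) = Θ := by
  ext z
  have hblock (a b : ι) : ∑ s, Θ (Matrix.single a o 1) * c s *
      star (Θ (Matrix.single b o 1) * c s) = Θ (Matrix.single a b 1) := calc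
    _ = Θ (Matrix.single a o 1) * rangeProjection c * star (Θ (Matrix.single b o 1)) := by
      simp only [rangeProjection, Finset.mul_sum, Finset.sum_mul, star_mul, mul_assoc]
    _ = Θ (Matrix.single a b 1) := by
      simp [hc, ← map_star, ← map_mul, Matrix.star_eq_conjTranspose]
  have hsum : Θ z = ∑ a, ∑ b, ∑ s, z a b • (Θ (Matrix.single a o 1) * c s *
      star (Θ (Matrix.single b o 1) * c s)) := by
    simp only [← Finset.smul_sum, hblock, ← map_smul, Matrix.smul_single, smul_eq_mul, mul_one,
      ← map_sum]
    rw [← Matrix.matrix_eq_sum_single]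
  rw [StarAlgHom.comp_apply, IsFrame.matrixHom_apply, hsum, ← E.sum_comp, Fintype.sum_prod_type]
  refine Finset.sum_congr rfl fun a _ => ?_
  rw [Finset.sum_comm (s := Finset.univ (α := ι))]
  refine Finset.sum_congr rfl fun t _ => ?_
  rw [← E.sum_comp, Fintype.sum_prod_type]
  simp [amplification_apply, Matrix.blockDiagonal_apply, ite_smul]

theorem IsPseudoRankFunction.map_sub_sum_le {ι Q : Type*} [Fintype ι] [Ring Q] [StarRing Q]
    {N : Q → ℝ} (hN : IsPseudoRankFunction N) {V : ι → Q} (hone : rangeProjection V = 1) {x : Q}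
    {y : ι → ι → Q} {δ : ℝ} (hy : ∀ a b, N (star (V a) * x * V b - y a b) ≤ δ) :
    N (x - ∑ a, ∑ b, V a * y a b * star (V b)) ≤ Fintype.card ι * Fintype.card ι * δ := by
  have hdecomp : x = ∑ a, ∑ b, V a * (star (V a) * x * V b) * star (V b) := calc
    x = rangeProjection V * x * rangeProjection V := by rw [hone, one_mul, mul_one]
    _ = _ := by
      simp only [rangeProjection, Finset.sum_mul, Finset.mul_sum, mul_assoc]
      exact Finset.sum_comm
  calc N (x - ∑ a, ∑ b, V a * y a b * star (V b))
    _ = N (∑ a, ∑ b, V a * (star (V a) * x * V b - y a b) * star (V b)) := by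
      simp only [mul_sub, sub_mul, Finset.sum_sub_distrib, ← hdecomp]
    _ ≤ ∑ a, ∑ b, N (V a * (star (V a) * x * V b - y a b) * star (V b)) :=
      (hN.sum_le _ _).trans (Finset.sum_le_sum fun a _ => hN.sum_le _ _)
    _ ≤ ∑ _ : ι, ∑ _ : ι, δ :=
      Finset.sum_le_sum fun a _ => Finset.sum_le_sum fun b _ =>
        (hN.mul_mul_le _ _ _).trans (hy a b)
    _ = Fintype.card ι * Fintype.card ι * δ := by simp [mul_assoc]

namespace IsDiffuseStarFactor

variable {F Q : Type*} [Field F] [StarRing F] [Ring Q] [StarRing Q] [Algebra F Q] {N : Q → ℝ}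

theorem exists_frame_prod_approx (C : IsDiffuseStarFactor Q N) (hF : PosDefStar F)
    (hpy : StarPythagorean F) (hloc : IsLocallyMatricial F N) {ι : Type*} [Fintype ι] {e : Q}
    {V : ι → Q} (hV : IsFrame (fun _ => e) V) (hone : rangeProjection V = 1)
    (s : Finset Q) {ε : ℝ} (hε : 0 < ε) :
    ∃ (m : ℕ) (h : Q) (c : Fin (2 ^ (m + 1)) → Q), IsFrame (fun _ => h) c ∧
      rangeProjection c = e ∧ ∀ x ∈ s,
        ∃ z ∈ frameSpan F (fun i : ι × Fin (2 ^ (m + 1)) => V i.1 * c i.2), N (x - z) < ε := by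
  have hN := C.isPseudoRankFunction
  have hcard : Fintype.card ι * N e = 1 := by
    rw [← hN.map_one, ← hone, hV.map_rangeProjection hN]
    simp
  classical
  obtain ⟨o⟩ : Nonempty ι := not_isEmpty_iff.1 fun _ => by simp at hcard
  have he : IsStarProjection e :=
    hV.star_mul_self o ▸ (hV.isPartialIsometry o).isStarProjection_initial
  have hpos : 0 < N e := (hN.nonneg e).lt_of_ne' fun h0 => by simp [h0] at hcard
  obtain ⟨m, h, c, hc, hrange, happrox⟩ := C.exists_frame_approx hF hpy hloc he hpos
    (s := Finset.image₂ (fun x (ab : ι × ι) => star (V ab.1) * x * V ab.2) s Finset.univ)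
    (fun y hy => by
      obtain ⟨x, -, ab, -, rfl⟩ := Finset.mem_image₂.1 hy
      rw [mul_assoc, mul_assoc (_ * x), hV.mul_initial, ← mul_assoc, ← mul_assoc,
        hV.initial_mul_star])
    (ε := ε / (Fintype.card ι * Fintype.card ι + 1)) (by positivity)
  refine ⟨m, h, c, hc, hrange, fun x hx => ?_⟩
  choose y hy hyN using fun a b =>
    happrox _ (Finset.mem_image₂_of_mem hx (Finset.mem_univ (a, b)))
  refine ⟨∑ a, ∑ b, V a * y a b * star (V b), ?_,
    (hN.map_sub_sum_le hone fun a b => (hyN a b).le).trans_lt ?_⟩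
  · refine Submodule.sum_mem _ fun a _ => Submodule.sum_mem _ fun b _ =>
      mul_mul_mem_of_mem_frameSpan (hy a b) fun i j =>
        Submodule.subset_span ⟨((a, i), (b, j)), ?_⟩
    simp only [star_mul, mul_assoc]
  · rw [← mul_div_assoc, div_lt_iff₀ (by positivity)]
    linarith

theorem exists_dyadic_extension_approx [StarModule F Q] (C : IsDiffuseStarFactor Q N)
    (hF : PosDefStar F) (hpy : StarPythagorean F) (hloc : IsLocallyMatricial F N) {n : ℕ}
    (Θ : Matrix (Fin (2 ^ n)) (Fin (2 ^ n)) F →⋆ₐ[F] Q) (s : Finset Q) {ε : ℝ} (hε : 0 < ε) :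
    ∃ (p : ℕ) (hp : n < p) (Θ' : Matrix (Fin (2 ^ p)) (Fin (2 ^ p)) F →⋆ₐ[F] Q),
      Θ'.comp (dyadicEmbedding F hp.le) = Θ ∧ ∀ x ∈ s, ∃ z, N (x - Θ' z) < ε := by
  have hV := isFrame_map_single Θ 0
  have hone := rangeProjection_map_single Θ 0
  obtain ⟨m, h, c, hc, hrange, happrox⟩ := C.exists_frame_prod_approx hF hpy hloc hV hone s hε
  obtain ⟨E, hE⟩ := exists_amplification_eq_dyadicEmbedding (F := F) n (m + 1)
  have hX := (hV.prod hc fun t => hrange ▸ hc.rangeProjection_mul t).comp E.symm.injective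
  have hXone := (rangeProjection_comp_equiv _ E.symm).trans
    ((rangeProjection_prod fun a => hrange ▸ hV.mul_initial a).trans hone)
  refine ⟨n + (m + 1), by omega, hX.matrixHom F hXone, ?_, fun x hx => ?_⟩
  · exact hE ▸ hX.matrixHom_comp_amplification Θ 0 hrange E hXone
  · obtain ⟨z, hz, hxz⟩ := happrox x hx
    rw [← frameSpan_comp_equiv _ E.symm] at hz
    obtain ⟨M, rfl⟩ := hX.frameSpan_le_range_matrixHom hXone hz
    exact ⟨M, hxz⟩

theorem exists_dyadic_chain [StarModule F Q] (C : IsDiffuseStarFactor Q N) (hF : PosDefStar F)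
    (hpy : StarPythagorean F) (hloc : IsLocallyMatricial F N) (b : ℕ → Q) :
    ∃ (p : ℕ → ℕ) (Θ : ∀ k, Matrix (Fin (2 ^ p k)) (Fin (2 ^ p k)) F →⋆ₐ[F] Q),
      (∀ k, k ≤ p k) ∧ (∀ k, ∃ h, (Θ (k + 1)).comp (dyadicEmbedding F h) = Θ k) ∧
      ∀ k, ∀ i < k, ∃ z, N (b i - Θ k z) < 1 / (k : ℝ) := by
  have hone : IsFrame (fun _ => 1) fun _ : Fin (2 ^ 0) => (1 : Q) :=
    ⟨fun _ => by simp [IsPartialIsometry], by simp, fun i j hij => (hij (by omega)).elim⟩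
  classical
  obtain ⟨f, hf, hr⟩ := exists_seq_forall_rel
    (α := Σ n, Matrix (Fin (2 ^ n)) (Fin (2 ^ n)) F →⋆ₐ[F] Q)
    (P := fun k f => k ≤ f.1 ∧ ∀ i < k, ∃ z, N (b i - f.2 z) < 1 / (k : ℝ))
    (r := fun _ f g => ∃ h, g.2.comp (dyadicEmbedding F h) = f.2)
    ⟨⟨0, hone.matrixHom F (by simp [rangeProjection])⟩, le_rfl, by simp⟩
    (by
      rintro k ⟨n, Θ⟩ ⟨hkn, -⟩
      obtain ⟨p, hp, Θ', hΘ', happrox⟩ := C.exists_dyadic_extension_approx hF hpy hloc Θ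
        ((Finset.range (k + 1)).image b) (ε := 1 / ((k + 1 : ℕ) : ℝ)) (by positivity)
      exact ⟨⟨p, Θ'⟩, ⟨hkn.trans_lt hp, fun i hi =>
        happrox _ (Finset.mem_image_of_mem b (Finset.mem_range.2 hi))⟩, hp.le, hΘ'⟩)
  exact ⟨fun k => (f k).1, fun k => (f k).2, fun k => (hf k).1, hr, fun k => (hf k).2⟩

theorem exists_dyadic_tower [StarModule F Q] (C : IsDiffuseStarFactor Q N) (hF : PosDefStar F)
    (hpy : StarPythagorean F) (hloc : IsLocallyMatricial F N) (b : ℕ → Q) :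
    ∃ Θ : ∀ n, Matrix (Fin (2 ^ n)) (Fin (2 ^ n)) F →⋆ₐ[F] Q,
      (∀ n, (Θ (n + 1)).comp (amplification F (doublingEquiv n)) = Θ n) ∧
      ∀ i, ∀ ε : ℝ, 0 < ε → ∃ n z, N (b i - Θ n z) < ε := by
  obtain ⟨p, Θ, hp, hΘ, happrox⟩ := C.exists_dyadic_chain hF hpy hloc b
  have hchain {j k} (hjk : j ≤ k) : ∃ h, (Θ k).comp (dyadicEmbedding F h) = Θ j := by
    induction k, hjk using Nat.le_induction with
    | base => exact ⟨le_rfl, by rw [dyadicEmbedding_self, StarAlgHom.comp_id]⟩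
    | succ k _ ih =>
      obtain ⟨h, hjk⟩ := ih
      obtain ⟨h', hk⟩ := hΘ k
      exact ⟨h.trans h', by
        rw [← dyadicEmbedding_comp h' h, ← StarAlgHom.comp_assoc, hk, hjk]⟩
  refine ⟨fun n => (Θ n).comp (dyadicEmbedding F (hp n)), fun n => ?_, fun i ε hε => ?_⟩
  · obtain ⟨h, hn⟩ := hΘ n
    beta_reduce
    rw [← dyadicEmbedding_succ_self, StarAlgHom.comp_assoc, dyadicEmbedding_comp, ← hn,
      StarAlgHom.comp_assoc, dyadicEmbedding_comp]
  · obtain ⟨k, hk⟩ := exists_nat_one_div_lt hε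
    obtain ⟨z, hz⟩ := happrox (max (k + 1) (i + 1)) i (by omega)
    obtain ⟨h, hlevel⟩ := hchain (hp (max (k + 1) (i + 1)))
    refine ⟨p (max (k + 1) (i + 1)), z, ?_⟩
    beta_reduce
    rw [hlevel]
    refine hz.trans (lt_of_le_of_lt ?_ hk)
    exact one_div_le_one_div_of_le (by positivity) (by exact_mod_cast le_max_left _ _)

end IsDiffuseStarFactor

/-! ### The completion of the dyadic tower -/

theorem IsPseudoRankFunction.rankDense_of_rankDense_span {F Q : Type*} [Field F] [Ring Q]
    [Algebra F Q] {N : Q → ℝ} (hN : IsPseudoRankFunction N) {s : Set Q}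
    (hs : RankDense N (Submodule.span F s : Set Q)) {V : Submodule F Q}
    (hV : ∀ x ∈ s, ∀ ε : ℝ, 0 < ε → ∃ y ∈ V, N (x - y) < ε) : RankDense N (V : Set Q) := by
  have hspan (x : Q) (hx : x ∈ Submodule.span F s) : ∀ ε : ℝ, 0 < ε → ∃ y ∈ V, N (x - y) < ε := by
    induction hx using Submodule.span_induction with
    | mem x hx => exact hV x hx
    | zero => exact fun ε hε => ⟨0, V.zero_mem, by rwa [sub_zero, hN.map_zero]⟩
    | add x x' _ _ ihx ihx' =>
      intro ε hε
      obtain ⟨y, hy, hxy⟩ := ihx (ε / 2) (half_pos hε)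
      obtain ⟨y', hy', hxy'⟩ := ihx' (ε / 2) (half_pos hε)
      refine ⟨y + y', V.add_mem hy hy', ?_⟩
      rw [add_sub_add_comm]
      linarith [hN.subadditive (x - y) (x' - y')]
    | smul c x _ ih =>
      intro ε hε
      obtain ⟨y, hy, hxy⟩ := ih ε hε
      refine ⟨c • y, V.smul_mem c hy, ?_⟩
      rw [← smul_sub]
      exact (hN.smul_le _ _).trans_lt hxy
  intro x ε hε
  obtain ⟨y, hy, hxy⟩ := hs x (ε / 2) (half_pos hε)
  obtain ⟨z, hz, hyz⟩ := hspan y hy (ε / 2) (half_pos hε)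
  exact ⟨z, hz, by linarith [hN.sub_le_sub_add_sub x y z]⟩

theorem exists_seq_span_range_eq {F M : Type*} [Field F] [AddCommGroup M] [Module F M]
    {V : Submodule F M} (hdim : Module.rank F V ≤ Cardinal.aleph0) :
    ∃ b : ℕ → M, Submodule.span F (Set.range b) = V := by
  let B := Module.Basis.ofVectorSpace F V
  have : Countable (Module.Basis.ofVectorSpaceIndex F V) := by
    rwa [← Cardinal.mk_le_aleph0_iff, B.mk_eq_rank'']
  have hB : Submodule.span F (V.subtype '' Set.range B) = V := by
    rw [Submodule.span_image, B.span_eq, Submodule.map_subtype_top]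
  obtain ⟨b, hb⟩ := (((Set.countable_range B).image V.subtype).insert 0).exists_eq_range
    (Set.insert_nonempty _ _)
  exact ⟨b, by rw [← hb, Submodule.span_insert_zero, hB]⟩

section MatrixTower

variable {F Q : Type*} [Field F] [StarRing F] [Ring Q] [Algebra F Q] [StarRing Q] [StarModule F Q]
  {N : Q → ℝ}

theorem monotone_range_of_dyadic_tower {Θ : ∀ n, Matrix (Fin (2 ^ n)) (Fin (2 ^ n)) F →⋆ₐ[F] Q}
    (hΘ : ∀ n, (Θ (n + 1)).comp (amplification F (doublingEquiv n)) = Θ n) :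
    Monotone fun n => (Θ n).range :=
  monotone_nat_of_le_succ fun n => by
    rintro _ ⟨z, rfl⟩
    exact ⟨_, DFunLike.congr_fun (hΘ n) z⟩

theorem isMFStarCompletion_of_dyadic_tower (hN : IsRankFunction N)
    (hstar : ∀ x, N (star x) = N x) (hcomplete : RankComplete N)
    {Θ : ∀ n, Matrix (Fin (2 ^ n)) (Fin (2 ^ n)) F →⋆ₐ[F] Q}
    (hΘ : ∀ n, (Θ (n + 1)).comp (amplification F (doublingEquiv n)) = Θ n)
    (hdense : RankDense N (⋃ n, ((Θ n).range : Set Q))) : IsMFStarCompletion F Q N := by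
  have : Nontrivial Q := ⟨1, 0, fun h => by simpa [h, hN.1.map_zero] using hN.1.map_one⟩
  have hinj (n : ℕ) : Function.Injective (Θ n) := (Θ n).toAlgHom.toRingHom.injective
  refine ⟨hN, hstar, hcomplete, fun n => (Θ n).range,
    fun n => monotone_range_of_dyadic_tower hΘ n.le_succ,
    fun n => (StarAlgEquiv.ofInjective (Θ n) (hinj n)).symm, hdense,
    fun n => ⟨2, doublingEquiv n, fun z => ?_⟩⟩
  rw [StarAlgEquiv.symm_apply_eq]
  exact Subtype.ext (DFunLike.congr_fun (hΘ n) z).symm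

theorem IsDiffuseStarFactor.isMFStarCompletion (C : IsDiffuseStarFactor Q N) (hF : PosDefStar F)
    (hpy : StarPythagorean F) (hloc : IsLocallyMatricial F N) {V : Submodule F Q}
    (hdim : Module.rank F V ≤ Cardinal.aleph0) (hdense : RankDense N (V : Set Q)) :
    IsMFStarCompletion F Q N := by
  obtain ⟨b, rfl⟩ := exists_seq_span_range_eq hdim
  obtain ⟨Θ, hΘ, happrox⟩ := C.exists_dyadic_tower hF hpy hloc b
  refine isMFStarCompletion_of_dyadic_tower C.isRankFunction C.map_star C.rankComplete hΘ ?_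
  rw [← StarSubalgebra.coe_iSup_of_directed (monotone_range_of_dyadic_tower hΘ).directed_le]
  refine C.isPseudoRankFunction.rankDense_of_rankDense_span hdense
    (V := Subalgebra.toSubmodule (⨆ n, (Θ n).range).toSubalgebra) ?_
  rintro _ ⟨i, rfl⟩ ε hε
  obtain ⟨n, z, hz⟩ := happrox i ε hε
  exact ⟨Θ n z, le_iSup (fun n => (Θ n).range) n ⟨z, rfl⟩, hz⟩

end MatrixTower

/-! ### Uniqueness of the pseudo-rank function of a matrix algebra -/

theorem IsPseudoRankFunction.map_isUnit_mul_mul_isUnit {R : Type*} [Ring R] {N : R → ℝ}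
    (hN : IsPseudoRankFunction N) {u v : R} (hu : IsUnit u) (hv : IsUnit v) (x : R) :
    N (u * x * v) = N x := by
  obtain ⟨u, rfl⟩ := hu
  obtain ⟨v, rfl⟩ := hv
  refine le_antisymm (hN.mul_mul_le _ _ _) ?_
  have hle := hN.mul_mul_le (↑u⁻¹ : R) (u * x * v) (↑v⁻¹ : R)
  rwa [mul_assoc (↑u⁻¹ : R), Units.mul_inv_cancel_right, Units.inv_mul_cancel_left] at hle

theorem IsPseudoRankFunction.eq_rank_div_card {F ι : Type*} [Field F] [StarRing F] [Fintype ι]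
    [DecidableEq ι] {N : Matrix ι ι F → ℝ} (hN : IsPseudoRankFunction N) (M : Matrix ι ι F) :
    N M = M.rank / Fintype.card ι := by
  obtain ⟨o⟩ : Nonempty ι := not_isEmpty_iff.1 fun _ => by
    simpa [Subsingleton.elim (1 : Matrix ι ι F) 0, hN.map_zero] using hN.map_one
  have hframe := isFrame_map_single (StarAlgHom.id F (Matrix ι ι F)) o
  have hmin : Fintype.card ι * N (Matrix.single o o 1) = 1 := by
    rw [← hN.map_one, ← rangeProjection_map_single (StarAlgHom.id F (Matrix ι ι F)) o,
      hframe.map_rangeProjection hN]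
    simp
  obtain ⟨U, V, e, hU, hV, hM⟩ := M.exists_rank_normal_form
  have hrange : rangeProjection ((fun a => Matrix.single a o (1 : F)) ∘ e.symm ∘ Sum.inl) =
      U * M * V := by
    rw [hM]
    ext i j
    obtain ⟨i, rfl⟩ := e.symm.surjective i
    obtain ⟨j, rfl⟩ := e.symm.surjective j
    rcases i with i | i <;> rcases j with j | j <;>
      simp [rangeProjection, Matrix.star_eq_conjTranspose, Matrix.sum_apply, Matrix.single_apply,
        Matrix.one_apply, ite_and]
  have hrank : N M = M.rank * N (Matrix.single o o 1) := by
    rw [← hN.map_isUnit_mul_mul_isUnit hU hV, ← hrange]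
    exact ((hframe.comp (e.symm.injective.comp Sum.inl_injective)).map_rangeProjection hN).trans
      (by simp)
  rw [hrank, eq_div_iff (left_ne_zero_of_mul_eq_one hmin), mul_assoc, mul_comm (N _), hmin, mul_one]

/-! ### The equivalent conditions -/

theorem IsUltramatricialStarAlgebra.isLocallyMatricial {F B Q : Type*} [Field F] [StarRing F]
    [Ring B] [Algebra F B] [StarRing B] [StarModule F B] [Ring Q] [Algebra F Q] [StarRing Q]
    {N : Q → ℝ} (hB : IsUltramatricialStarAlgebra F B) {φ : B →⋆ₐ[F] Q}
    (hφ : RankDense N (Set.range φ)) : IsLocallyMatricial F N := by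
  obtain ⟨A, hA, hmat, hcover⟩ := hB
  have hmono : Monotone A := monotone_nat_of_le_succ hA
  intro ε hε s
  have happrox (x : Q) : ∃ b, N (x - φ b) < ε := by simpa using hφ x ε hε
  choose b hb using happrox
  choose r hr using fun x => hcover (b x)
  obtain ⟨k, n, hn, ⟨γ⟩⟩ := hmat (s.sup r)
  refine ⟨k, n, hn, φ.comp ((A (s.sup r)).subtype.comp (γ.symm : _ →⋆ₐ[F] A (s.sup r))),
    fun x hx => ⟨γ ⟨b x, hmono (Finset.le_sup hx) (hr x)⟩, ?_⟩⟩
  simpa using hb x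

section Conditions

variable {F Q : Type*} [Field F] [StarRing F] [Ring Q] [Algebra F Q] [StarRing Q] [StarModule F Q]
  {N : Q → ℝ}

theorem isStandardMatricialStarAlgebra_of_matrixEquiv {n : ℕ} (hn : 0 < n)
    (γ : Q ≃⋆ₐ[F] Matrix (Fin n) (Fin n) F) : IsStandardMatricialStarAlgebra F Q :=
  ⟨0, fun _ => n, fun _ => hn,
    ⟨γ.trans (StarAlgEquiv.ofAlgEquiv (AlgEquiv.funUnique F (Fin 1) _) fun _ => rfl).symm⟩⟩

theorem IsMFStarCompletion.exists_matricial_starSubalgebra_approx (h : IsMFStarCompletion F Q N)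
    {ε : ℝ} (hε : 0 < ε) {ι : Type*} [Finite ι] (x : ι → Q) :
    ∃ A : StarSubalgebra F Q, IsStandardMatricialStarAlgebra F A ∧
      ∃ y : ι → Q, (∀ i, y i ∈ A) ∧ ∀ i, N (x i - y i) < ε := by
  cases nonempty_fintype ι
  obtain ⟨-, -, -, A, hA, γ, hdense, -⟩ := h
  have hmono : Monotone A := monotone_nat_of_le_succ hA
  choose y hy hxy using fun i => hdense (x i) ε hε
  choose m hm using fun i => Set.mem_iUnion.1 (hy i)
  exact ⟨A (Finset.univ.sup m),
    isStandardMatricialStarAlgebra_of_matrixEquiv (by positivity) (γ _), y,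
    fun i => hmono (Finset.le_sup (Finset.mem_univ i)) (hm i), hxy⟩

theorem isLocallyMatricial_of_forall_exists_starSubalgebra_approx
    (h : ∀ ε : ℝ, 0 < ε → ∀ (n : ℕ) (x : Fin n → Q),
      ∃ A : StarSubalgebra F Q, IsStandardMatricialStarAlgebra F A ∧
        ∃ y : Fin n → Q, (∀ i, y i ∈ A) ∧ ∀ i, N (x i - y i) < ε) : IsLocallyMatricial F N := by
  intro ε hε s
  obtain ⟨A, ⟨k, n, hn, ⟨γ⟩⟩, y, hy, hxy⟩ := h ε hε s.card fun i => s.equivFin.symm i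
  refine ⟨k, n, hn, A.subtype.comp (γ.symm : _ →⋆ₐ[F] A), fun x hx =>
    ⟨γ ⟨y (s.equivFin ⟨x, hx⟩), hy _⟩, ?_⟩⟩
  simpa using hxy (s.equivFin ⟨x, hx⟩)

section Union

variable {A : ℕ → StarSubalgebra F Q}

theorem exists_mem_of_mem_iSup (hA : Monotone A) (b : ↥(⨆ n, A n)) : ∃ n, (b : Q) ∈ A n := by
  have hb : (b : Q) ∈ ((⨆ n, A n : StarSubalgebra F Q) : Set Q) := b.2
  rwa [StarSubalgebra.coe_iSup_of_directed hA.directed_le, Set.mem_iUnion] at hb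

theorem isUltramatricialStarAlgebra_iSup (hA : Monotone A)
    (hmat : ∀ n, IsStandardMatricialStarAlgebra F (A n)) :
    IsUltramatricialStarAlgebra F ↥(⨆ n, A n) := by
  refine ⟨fun n => (StarSubalgebra.inclusion (le_iSup A n)).range, fun n => ?_, fun n => ?_,
    fun b => ?_⟩
  · rintro _ ⟨a, rfl⟩
    exact ⟨⟨a, hA n.le_succ a.2⟩, rfl⟩
  · obtain ⟨k, m, hm, ⟨γ⟩⟩ := hmat n
    exact ⟨k, m, hm, ⟨(StarAlgEquiv.ofInjective _
      (StarSubalgebra.inclusion_injective (le_iSup A n))).symm.trans γ⟩⟩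
  · obtain ⟨n, hn⟩ := exists_mem_of_mem_iSup hA b
    exact ⟨n, ⟨b, hn⟩, rfl⟩

theorem IsPseudoRankFunction.eq_of_matrixEquiv_iSup (hA : Monotone A) {p : ℕ → ℕ}
    (γ : ∀ n, A n ≃⋆ₐ[F] Matrix (Fin (p n)) (Fin (p n)) F) {N₁ N₂ : ↥(⨆ n, A n) → ℝ}
    (h₁ : IsPseudoRankFunction N₁) (h₂ : IsPseudoRankFunction N₂) : N₁ = N₂ := by
  funext b
  obtain ⟨n, hn⟩ := exists_mem_of_mem_iSup hA b
  let f : Matrix (Fin (p n)) (Fin (p n)) F →⋆ₐ[F] ↥(⨆ n, A n) :=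
    (StarSubalgebra.inclusion (le_iSup A n)).comp ((γ n).symm : _ →⋆ₐ[F] A n)
  have hf : f (γ n ⟨b, hn⟩) = b := Subtype.ext (by simp [f])
  rw [← hf]
  exact ((h₁.comp f.toAlgHom.toRingHom).eq_rank_div_card _).trans
    ((h₂.comp f.toAlgHom.toRingHom).eq_rank_div_card _).symm

end Union

end Conditions

section UltramatricialStarCompletion

variable {F Q : Type} [Field F] [StarRing F] [Ring Q] [Algebra F Q] [StarRing Q] [StarModule F Q]
  {N : Q → ℝ}

theorem UltramatricialStarCompletionData.isLocallyMatricial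
    (D : UltramatricialStarCompletionData F Q N) : IsLocallyMatricial F N := by
  obtain ⟨_, _, -, -, hB, _, -, hφ, -⟩ := D
  exact hB.isLocallyMatricial hφ

theorem IsMFStarCompletion.nonempty_ultramatricialStarCompletionData
    (h : IsMFStarCompletion F Q N) : Nonempty (UltramatricialStarCompletionData F Q N) := by
  obtain ⟨hN, -, hcomplete, A, hA, γ, hdense, -⟩ := h
  have hmono : Monotone A := monotone_nat_of_le_succ hA
  have hrestrict : IsPseudoRankFunction fun b : ↥(⨆ n, A n) => N b :=
    hN.1.comp (⨆ n, A n).subtype.toAlgHom.toRingHom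
  exact ⟨{
    B := ↥(⨆ n, A n)
    NB := fun b => N b
    pseudoRank := hrestrict
    extremal := ⟨hrestrict, fun _ h₁ _ _ _ =>
      IsPseudoRankFunction.eq_of_matrixEquiv_iSup hmono γ h₁ hrestrict⟩
    ultramatricial := isUltramatricialStarAlgebra_iSup hmono fun n =>
      isStandardMatricialStarAlgebra_of_matrixEquiv (by positivity) (γ n)
    φ := (⨆ n, A n).subtype
    rank_eq := fun _ => rfl
    dense := by simpa [StarSubalgebra.coe_iSup_of_directed hmono.directed_le] using hdense
    complete := hcomplete }⟩

end UltramatricialStarCompletion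

/-- **Corollary 4.10** (Ara–Claramunt). For a `*`-Pythagorean field `(F, *)` with positive
definite involution and a continuous `*`-factor `Q` over `F` with a dense `*`-subalgebra of
countable `F`-dimension, the following are equivalent: (i) `Q ≅ M_F` as `*`-algebras;
(ii) `Q` is the completion of an ultramatricial `*`-algebra with respect to an extremal
pseudo-rank function; (iii) `Q` is locally approximated by matricial `*`-subalgebras. -/
theorem statement16 (F : Type) [Field F] [StarRing F]
    (hF : PosDefStar F) (hFpyth : StarPythagorean F)
    (Q : Type) [Ring Q] [Algebra F Q] [StarRing Q] [StarModule F Q]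
    (hQ : IsContinuousFactor Q) (hQproper : ProperStar Q)
    (NQ : Q → ℝ) (hNQ : IsRankFunction NQ)
    (Q₀ : StarSubalgebra F Q) (hdim : Module.rank F Q₀ ≤ Cardinal.aleph0)
    (hdense : RankDense NQ (Q₀ : Set Q)) :
    List.TFAE
      [ IsMFStarCompletion F Q NQ,
        Nonempty (UltramatricialStarCompletionData F Q NQ),
        ∀ ε : ℝ, 0 < ε → ∀ (n : ℕ) (x : Fin n → Q),
          ∃ A : StarSubalgebra F Q, IsStandardMatricialStarAlgebra F A ∧
            ∃ y : Fin n → Q, (∀ i, y i ∈ A) ∧ ∀ i, NQ (x i - y i) < ε ] := by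
  have hreg : IsRankedStarRegular Q NQ := ⟨hQ.2.2.1, hQ.2.1, hQproper, hNQ⟩
  have : IsSimpleRing Q := hQ.1
  obtain ⟨N₀, hN₀, hrange⟩ := hQ.2.2.2.2
  have isMF_of_isLocallyMatricial (hloc : IsLocallyMatricial F NQ) : IsMFStarCompletion F Q NQ :=
    (hreg.isDiffuseStarFactor hN₀ hrange hF hFpyth hloc).isMFStarCompletion hF hFpyth hloc
      (V := Subalgebra.toSubmodule Q₀.toSubalgebra) hdim hdense
  tfae_have 1 → 2 := fun h => h.nonempty_ultramatricialStarCompletionData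
  tfae_have 2 → 1 := fun ⟨D⟩ => isMF_of_isLocallyMatricial D.isLocallyMatricial
  tfae_have 1 → 3 := fun h _ hε _ x => h.exists_matricial_starSubalgebra_approx hε x
  tfae_have 3 → 1 := fun h =>
    isMF_of_isLocallyMatricial (isLocallyMatricial_of_forall_exists_starSubalgebra_approx h)
  tfae_finish

end AraClaramunt
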